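/- There exists a constant C > 0 such that for all sufficiently large n, the number S(n) of multiplicative Sidon subsets of [n] satisfies S(n) ≤ T(n) · 2^{C·n^{3/4}/(log n)^{3/2}}, where log denotes the natural logarithm. -/

import Mathlib

open scoped Classical

/-- A finite set of naturals is multiplicative Sidon if it contains no four
distinct elements `a₁, a₂, b₁, b₂` with `a₁ * a₂ = b₁ * b₂`. -/
def MulSidon (A : Finset ℕ) : Prop :=
  ¬ ∃ a₁ a₂ b₁ b₂, a₁ ∈ A ∧ a₂ ∈ A ∧ b₁ ∈ A ∧ b₂ ∈ A ∧
    a₁ ≠ a₂ ∧ a₁ ≠ b₁ ∧ a₁ ≠ b₂ ∧ a₂ ≠ b₁ ∧ a₂ ≠ b₂ ∧ b₁ ≠ b₂ ∧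
    a₁ * a₂ = b₁ * b₂

/-- `S n`: the number of multiplicative Sidon subsets of `{1, …, n}`. -/
noncomputable def S (n : ℕ) : ℕ :=
  ((Finset.Icc 1 n).powerset.filter (fun A => MulSidon A)).card

/-- `T n = ∏_{p prime, n^{2/3} < p ≤ n} (⌊n/p⌋ + 1)`. -/
noncomputable def T (n : ℕ) : ℕ :=
  ∏ p ∈ (Finset.Icc 1 n).filter
      (fun p => Nat.Prime p ∧ (n : ℝ) ^ ((2 : ℝ)/3) < (p : ℝ)),
    (n / p + 1)

/-!
Split `[n]` according to whether the largest prime factor exceeds `n^(2/3)`. A Sidon set of numbers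
with such a large prime factor is determined by its largest multiple of each prime `p > n^(2/3)`,
for which there are `T(n)` choices in all, and by its remaining elements: by the Sidon property
these are so few that their number of choices is of lower order.

Every other `m ≤ n` is written as `m = u * v`, with `u` the largest divisor of `m` that is at most
`n^(2/3)`; then `v ≤ u`. The pairs `(u, v)` coming from a Sidon set are the edges of a bipartite
graph without 4-cycles. Group the `m` by the dyadic scale `j` of `√n / v`. Maximality of `u` forbids
`u` and `v` to have prime factors of intermediate size, and a sieve then leaves at most about
`2^j √n / log n` possible `u` and `2^(-j) √n / log n` possible `v`, up to powers of `j`. The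
Kleitman–Winston method bounds the number of `C₄`-free graphs with parts of sizes `a ≥ b` by
`exp(O(b √a (1 + log(a / b))))`, up to lower-order terms. At scale `j` this exponent is
`n^(3/4) / (log n)^(3/2)` times `2^(-j/2)` and a power of `j`, which is summable over `j`.
-/

open Finset Real

section KleitmanWinston

/-! ### The Kleitman–Winston method -/

variable {α β : Type*}

theorem card_powerset_filter_card_le (W : Finset α) (d : ℕ) {t R : ℝ} (ht : 0 < t) (ht1 : t ≤ 1)
    (hW : (#W : ℝ) ≤ R) : (#{I ∈ W.powerset | #I ≤ d} : ℝ) ≤ t⁻¹ ^ d * exp (t * R) := by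
  have one_le_weight (I : Finset α) (hI : #I ≤ d) : 1 ≤ t⁻¹ ^ d * t ^ #I := by
    rw [inv_pow, ← div_eq_inv_mul, one_le_div (by positivity)]
    exact pow_le_pow_of_le_one ht.le ht1 hI
  calc (#{I ∈ W.powerset | #I ≤ d} : ℝ)
      = ∑ I ∈ W.powerset with #I ≤ d, 1 := by simp
    _ ≤ ∑ I ∈ W.powerset with #I ≤ d, t⁻¹ ^ d * t ^ #I :=
        sum_le_sum fun I hI ↦ one_le_weight I (mem_filter.mp hI).2
    _ ≤ ∑ I ∈ W.powerset, t⁻¹ ^ d * t ^ #I :=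
        sum_le_sum_of_subset_of_nonneg (filter_subset _ _) fun _ _ _ ↦ by positivity
    _ = t⁻¹ ^ d * (t + 1) ^ #W := by
        rw [← mul_sum, ← sum_pow_mul_eq_add_pow]
        simp only [one_pow, mul_one]
    _ ≤ t⁻¹ ^ d * exp t ^ #W := by gcongr; exact add_one_le_exp t
    _ = t⁻¹ ^ d * exp (t * #W) := by rw [← exp_nat_mul, mul_comm (#W : ℝ)]
    _ ≤ t⁻¹ ^ d * exp (t * R) := by gcongr

/-- The independent sets of `G` with at most `d` vertices, all of them in `W`. -/
noncomputable def smallIndepSets (G : SimpleGraph α) (W : Finset α) (d : ℕ) :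
    Finset (Finset α) :=
  {I ∈ W.powerset | G.IsIndepSet I ∧ #I ≤ d}

theorem mem_smallIndepSets {G : SimpleGraph α} {W I : Finset α} {d : ℕ} :
    I ∈ smallIndepSets G W d ↔ I ⊆ W ∧ G.IsIndepSet I ∧ #I ≤ d := by
  rw [smallIndepSets, mem_filter, mem_powerset]

theorem card_smallIndepSets_le_card_subsets (G : SimpleGraph α) (W : Finset α) (d : ℕ) :
    #(smallIndepSets G W d) ≤ #{I ∈ W.powerset | #I ≤ d} :=
  card_le_card <| monotone_filter_right _ fun _ _ h ↦ h.2

theorem card_smallIndepSets_le_add (G : SimpleGraph α) (W : Finset α) (d : ℕ) (x : α) :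
    #(smallIndepSets G W d) ≤ #(smallIndepSets G (W.erase x) d) +
      #(smallIndepSets G {p ∈ W.erase x | ¬ G.Adj x p} d) := by
  have subset_union : smallIndepSets G W d ⊆ smallIndepSets G (W.erase x) d ∪
      (smallIndepSets G {p ∈ W.erase x | ¬ G.Adj x p} d).image (insert x) := by
    intro I hI
    obtain ⟨hIW, hindep, hcard⟩ := mem_smallIndepSets.mp hI
    by_cases hxI : x ∈ I
    · refine mem_union_right _ (mem_image.mpr ⟨I.erase x, mem_smallIndepSets.mpr ⟨?_, ?_, ?_⟩,
        insert_erase hxI⟩)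
      · intro p hp
        obtain ⟨hpx, hpI⟩ := mem_erase.mp hp
        exact mem_filter.mpr ⟨mem_erase.mpr ⟨hpx, hIW hpI⟩, hindep hxI hpI hpx.symm⟩
      · exact hindep.mono (coe_subset.mpr (erase_subset x I))
      · exact (card_le_card (erase_subset x I)).trans hcard
    · exact mem_union_left _ (mem_smallIndepSets.mpr ⟨subset_erase.mpr ⟨hIW, hxI⟩, hindep, hcard⟩)
  exact (card_le_card subset_union).trans <|
    (card_union_le _ _).trans (Nat.add_le_add_left card_image_le _)

theorem card_filter_not_adj_add (G : SimpleGraph α) {W : Finset α} {x : α} (hx : x ∈ W) :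
    #{p ∈ W.erase x | ¬ G.Adj x p} + 1 + #{p ∈ W | G.Adj x p} = #W := by
  have : {p ∈ W.erase x | G.Adj x p} = {p ∈ W | G.Adj x p} := by
    rw [filter_erase, erase_eq_of_notMem (by simp)]
  rw [← card_erase_add_one hx, ← card_filter_add_card_filter_not (s := W.erase x) (G.Adj x ·), this]
  ring

/-- The Kleitman–Winston algorithm: a vertex `x` adjacent to a fraction `b` of `W` is either left
out, or chosen, and then all its neighbours are discarded. After `k` choices at most `R` vertices
survive. -/
theorem card_smallIndepSets_le (G : SimpleGraph α) {b R t : ℝ} (d : ℕ) (ht : 0 < t) (ht1 : t ≤ 1)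
    (W : Finset α) (hdense : ∀ W' ⊆ W, R < #W' → ∃ x ∈ W', b * #W' ≤ #{p ∈ W' | G.Adj x p})
    (k : ℕ) (hk : #W * exp (-(b * k)) ≤ R) :
    (#(smallIndepSets G W d) : ℝ) ≤ (#W + 1) ^ k * (t⁻¹ ^ d * exp (t * R)) := by
  induction W using Finset.strongInduction generalizing k with
  | H W ih =>
  set B := t⁻¹ ^ d * exp (t * R)
  have hB : 0 < B := by positivity
  rcases le_or_gt (#W : ℝ) R with hWR | hWR
  · calc (#(smallIndepSets G W d) : ℝ)
        ≤ B := (Nat.cast_le.mpr (card_smallIndepSets_le_card_subsets G W d)).trans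
          (card_powerset_filter_card_le W d ht ht1 hWR)
      _ ≤ (#W + 1) ^ k * B := le_mul_of_one_le_left hB.le (one_le_pow₀ (by simp))
  rcases k with _ | k
  · simp at hk; linarith
  obtain ⟨x, hxW, hx⟩ := hdense W subset_rfl hWR
  set W' := {p ∈ W.erase x | ¬ G.Adj x p}
  have hW'W : W' ⊆ W.erase x := filter_subset _ _
  have card_erase : (#(W.erase x) : ℝ) + 1 = #W := mod_cast card_erase_add_one hxW
  have card_W' : (#W' : ℝ) + 1 + #{p ∈ W | G.Adj x p} = #W :=
    mod_cast card_filter_not_adj_add G hxW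
  have shrink : #W' * exp (-(b * k)) ≤ R := by
    refine le_trans ?_ hk
    calc #W' * exp (-(b * k)) ≤ (#W * exp (-b)) * exp (-(b * k)) := by
          gcongr
          nlinarith [add_one_le_exp (-b), (#W).cast_nonneg (α := ℝ)]
      _ = #W * exp (-(b * (k + 1 : ℕ))) := by rw [mul_assoc, ← exp_add]; push_cast; ring_nf
  have count_erase := ih _ (erase_ssubset hxW)
    (fun V hV ↦ hdense V (hV.trans (erase_subset _ _))) (k + 1)
    (hk.trans' (by gcongr; exact erase_subset _ _))
  have count_W' := ih W' (hW'W.trans_ssubset (erase_ssubset hxW))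
    (fun V hV ↦ hdense V (hV.trans (hW'W.trans (erase_subset _ _)))) k shrink
  calc (#(smallIndepSets G W d) : ℝ)
      ≤ #(smallIndepSets G (W.erase x) d) + #(smallIndepSets G W' d) :=
        mod_cast card_smallIndepSets_le_add G W d x
    _ ≤ (#W : ℝ) ^ (k + 1) * B + (#W : ℝ) ^ k * B := by
        rw [card_erase] at count_erase
        refine add_le_add count_erase (count_W'.trans ?_)
        gcongr
        linarith [Nat.cast_nonneg (α := ℝ) #{p ∈ W | G.Adj x p}]
    _ = (#W : ℝ) ^ k * (#W + 1) * B := by ring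
    _ ≤ (#W + 1 : ℝ) ^ k * (#W + 1) * B := by gcongr; simp
    _ = (#W + 1) ^ (k + 1) * B := by ring

/-- The graph in which `p` and `q` are adjacent when the distinct sets `N p` and `N q` meet. -/
def intersectionGraph (N : α → Finset β) : SimpleGraph α where
  Adj p q := p ≠ q ∧ ¬ Disjoint (N p) (N q)
  symm := ⟨fun _ _ h ↦ ⟨h.1.symm, fun h' ↦ h.2 h'.symm⟩⟩
  loopless := ⟨fun _ h ↦ h.1 rfl⟩

theorem sum_sq_card_filter_mem {N : α → Finset β} {W : Finset α} {Q : Finset β}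
    (hNQ : ∀ p ∈ W, N p ⊆ Q) :
    ∑ v ∈ Q, #{p ∈ W | v ∈ N p} ^ 2 = ∑ x ∈ W, ∑ p ∈ W, #(N x ∩ N p) := by
  have double_count := sum_card_bipartiteAbove_eq_sum_card_bipartiteBelow (s := Q) (t := W ×ˢ W)
    fun v xp ↦ v ∈ N xp.1 ∧ v ∈ N xp.2
  calc ∑ v ∈ Q, #{p ∈ W | v ∈ N p} ^ 2
      = ∑ v ∈ Q, #{xp ∈ W ×ˢ W | v ∈ N xp.1 ∧ v ∈ N xp.2} :=
        sum_congr rfl fun v _ ↦ by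
          rw [filter_product (v ∈ N ·) (v ∈ N ·), card_product, sq]
    _ = ∑ xp ∈ W ×ˢ W, #{v ∈ Q | v ∈ N xp.1 ∧ v ∈ N xp.2} := double_count
    _ = ∑ xp ∈ W ×ˢ W, #(N xp.1 ∩ N xp.2) := sum_congr rfl fun xp hxp ↦ by
        congr 1
        ext v
        have := @hNQ xp.1 (mem_product.mp hxp).1 v
        simp only [mem_filter, mem_inter]
        tauto
    _ = ∑ x ∈ W, ∑ p ∈ W, #(N x ∩ N p) := sum_product _ _ _

theorem sum_card_inter_le {N : α → Finset β} {W : Finset α}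
    (hlin : ∀ p ∈ W, ∀ q ∈ W, p ≠ q → #(N p ∩ N q) ≤ 1) {x : α} (hx : x ∈ W) :
    ∑ p ∈ W, #(N x ∩ N p) ≤ #(N x) + #{p ∈ W | (intersectionGraph N).Adj x p} := by
  have : {p ∈ W | (intersectionGraph N).Adj x p} = {p ∈ W.erase x | ¬ Disjoint (N x) (N p)} := by
    ext p
    rw [mem_filter, mem_filter, mem_erase, intersectionGraph]
    tauto
  rw [← add_sum_erase W _ hx, inter_self, this, card_filter]
  gcongr with p hp
  obtain ⟨hpx, hpW⟩ := mem_erase.mp hp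
  split_ifs with hdisj
  · rw [disjoint_iff_inter_eq_empty.mp hdisj, card_empty]
  · exact hlin x hx p hpW hpx.symm

theorem sum_card_filter_mem {N : α → Finset β} {W : Finset α} {Q : Finset β}
    (hNQ : ∀ p ∈ W, N p ⊆ Q) : ∑ v ∈ Q, #{p ∈ W | v ∈ N p} = ∑ p ∈ W, #(N p) := by
  have double_count := sum_card_bipartiteAbove_eq_sum_card_bipartiteBelow (s := Q) (t := W)
    fun v p ↦ v ∈ N p
  refine double_count.trans (sum_congr rfl fun p hp ↦ ?_)
  rw [bipartiteBelow, filter_mem_eq_inter, inter_eq_right.mpr (hNQ p hp)]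

/-- Cauchy–Schwarz makes the average degree of the intersection graph large. -/
theorem exists_mul_card_le_card_intersectionGraph_adj {N : α → Finset β} {W : Finset α}
    {Q : Finset β} {q δ : ℝ} (hQ : #Q ≤ q) (hq : 0 < q) (hδ : 0 < δ) (hNQ : ∀ p ∈ W, N p ⊆ Q)
    (hdeg : ∀ p ∈ W, δ ≤ #(N p)) (hlin : ∀ p ∈ W, ∀ p' ∈ W, p ≠ p' → #(N p ∩ N p') ≤ 1)
    (hW : 2 * q / δ < #W) :
    ∃ x ∈ W, δ ^ 2 / (2 * q) * #W ≤ #{p ∈ W | (intersectionGraph N).Adj x p} := by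
  by_contra! hsparse
  have hWpos : (0 : ℝ) < #W := lt_trans (by positivity) hW
  have hne : W.Nonempty := card_pos.mp (mod_cast hWpos)
  set E : ℝ := ∑ p ∈ W, (#(N p) : ℝ)
  have cauchy_schwarz : E ^ 2 ≤ q * ∑ v ∈ Q, (#{p ∈ W | v ∈ N p} : ℝ) ^ 2 := by
    have : E = ∑ v ∈ Q, (#{p ∈ W | v ∈ N p} : ℝ) := by
      simp only [E, ← Nat.cast_sum, sum_card_filter_mem hNQ]
    rw [this]
    exact sq_sum_le_card_mul_sum_sq.trans
      (mul_le_mul_of_nonneg_right hQ (sum_nonneg fun _ _ ↦ sq_nonneg _))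
  have few_pairs :
      ∑ v ∈ Q, (#{p ∈ W | v ∈ N p} : ℝ) ^ 2 < E + #W * (δ ^ 2 / (2 * q) * #W) := by
    calc ∑ v ∈ Q, (#{p ∈ W | v ∈ N p} : ℝ) ^ 2
        = ∑ x ∈ W, ((∑ p ∈ W, #(N x ∩ N p) : ℕ) : ℝ) := by
          simp only [← Nat.cast_sum, ← Nat.cast_pow, sum_sq_card_filter_mem hNQ]
      _ < ∑ x ∈ W, (#(N x) + δ ^ 2 / (2 * q) * #W : ℝ) := by
          refine sum_lt_sum_of_nonempty hne fun x hx ↦ ?_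
          have : ((∑ p ∈ W, #(N x ∩ N p) : ℕ) : ℝ) ≤
            #(N x) + #{p ∈ W | (intersectionGraph N).Adj x p} := mod_cast sum_card_inter_le hlin hx
          linarith [hsparse x hx]
      _ = E + #W * (δ ^ 2 / (2 * q) * #W) := by rw [sum_add_distrib, sum_const, nsmul_eq_mul]
  have le_E : δ * #W ≤ E := by
    calc δ * #W = ∑ _p ∈ W, δ := by rw [sum_const, nsmul_eq_mul, mul_comm]
      _ ≤ E := sum_le_sum hdeg
  have E_sq_lt : E ^ 2 < q * E + (δ * #W) ^ 2 / 2 := by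
    calc E ^ 2 < q * (E + #W * (δ ^ 2 / (2 * q) * #W)) := cauchy_schwarz.trans_lt (by gcongr)
      _ = q * E + (δ * #W) ^ 2 / 2 := by field_simp
  rw [div_lt_iff₀ hδ] at hW
  nlinarith

theorem mul_neg_log_le_one_sub {x : ℝ} (hx : 0 < x) : x * -log x ≤ 1 - x := by
  have := one_sub_inv_le_log_of_pos hx
  nlinarith [mul_inv_cancel₀ hx.ne']

theorem card_smallIndepSets_le_exp (G : SimpleGraph α) (P : Finset α) (d : ℕ) {L : ℝ}
    (hP : log (#P + 1) ≤ L) : (#(smallIndepSets G P d) : ℝ) ≤ exp (L * d + 1) := by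
  have hpos : (0 : ℝ) < #P + 1 := by positivity
  calc (#(smallIndepSets G P d) : ℝ)
      ≤ #{I ∈ P.powerset | #I ≤ d} := mod_cast card_smallIndepSets_le_card_subsets G P d
    _ ≤ (#P + 1 : ℝ)⁻¹⁻¹ ^ d * exp ((#P + 1 : ℝ)⁻¹ * (#P + 1)) :=
        card_powerset_filter_card_le P d (by positivity) (inv_le_one_of_one_le₀ (by simp))
          (by simp)
    _ = (#P + 1 : ℝ) ^ d * exp 1 := by rw [inv_inv, inv_mul_cancel₀ hpos.ne']
    _ ≤ exp L ^ d * exp 1 := by gcongr; exact (log_le_iff_le_exp hpos).mp hP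
    _ = exp (L * d + 1) := by rw [exp_add, ← exp_nat_mul, mul_comm L]

theorem card_smallIndepSets_intersectionGraph_le {N : α → Finset β} {P : Finset α} {Q : Finset β}
    {q δ t : ℝ} (d k : ℕ) (ht : 0 < t) (ht1 : t ≤ 1) (hQ : #Q ≤ q) (hq : 0 < q) (hδ : 0 < δ)
    (hNQ : ∀ p ∈ P, N p ⊆ Q) (hdeg : ∀ p ∈ P, δ ≤ #(N p))
    (hlin : ∀ p ∈ P, ∀ p' ∈ P, p ≠ p' → #(N p ∩ N p') ≤ 1)
    (hk : #P * exp (-(δ ^ 2 / (2 * q) * k)) ≤ 2 * q / δ) :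
    (#(smallIndepSets (intersectionGraph N) P d) : ℝ) ≤
      (#P + 1) ^ k * (t⁻¹ ^ d * exp (t * (2 * q / δ))) :=
  card_smallIndepSets_le _ d ht ht1 P (fun _ hW hlarge ↦
    exists_mul_card_le_card_intersectionGraph_adj hQ hq hδ (fun p hp ↦ hNQ p (hW hp))
      (fun p hp ↦ hdeg p (hW hp)) (fun p hp p' hp' ↦ hlin p (hW hp) p' (hW hp')) hlarge) k hk

theorem inv_pow_le_exp_of_eq_min {σ s x : ℝ} {d : ℕ} (hσ : 0 < σ) (hσs : σ ≤ s) (hx0 : 0 < x)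
    (hx : x = min (d / σ) 1) (hd : σ < s → d ≤ σ) :
    (σ / s * x ^ 2)⁻¹ ^ d ≤ exp (σ * (2 + log (s / σ))) := by
  have hs : 0 < s := hσ.trans_le hσs
  rw [← log_le_iff_le_exp (by positivity), log_pow, mul_inv, inv_div,
    log_mul (by positivity) (by positivity), log_inv, log_pow, Nat.cast_ofNat]
  rcases le_or_gt (d : ℝ) σ with hdσ | hdσ
  · rw [min_eq_left (div_le_one_of_le₀ hdσ hσ.le)] at hx
    have hx1 : x ≤ 1 := hx ▸ div_le_one_of_le₀ hdσ hσ.le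
    have hlog : 0 ≤ log (s / σ) := log_nonneg ((one_le_div hσ).mpr hσs)
    have : x * (log (s / σ) + -(2 * log x)) ≤ 2 + log (s / σ) := by
      nlinarith [mul_neg_log_le_one_sub hx0]
    calc (d : ℝ) * (log (s / σ) + -(2 * log x))
        = σ * (x * (log (s / σ) + -(2 * log x))) := by rw [hx]; field_simp
      _ ≤ σ * (2 + log (s / σ)) := by gcongr
  · have hsσ : s = σ := le_antisymm (not_lt.mp fun h ↦ (hd h).not_gt hdσ) hσs
    rw [min_eq_right ((one_le_div hσ).mpr hdσ.le)] at hx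
    simp [hx, hsσ, hσ.ne', hσ.le]

theorem natCeil_div_sq_le {c L x : ℝ} (hc : 1 ≤ c) (hL : 1 < L) (hx : 1 / L < x) :
    (⌈8 * c * L / x ^ 2⌉₊ : ℝ) ≤ 9 * c * L ^ 3 := by
  have hx0 : 0 < x := lt_trans (by positivity) hx
  have one_le : 1 ≤ x * L := ((div_lt_iff₀ (by linarith)).mp hx).le
  have : 8 * c * L / x ^ 2 ≤ 8 * c * L ^ 3 := by
    rw [div_le_iff₀ (by positivity)]
    calc 8 * c * L = 8 * c * L * 1 := by ring
      _ ≤ 8 * c * L * (x * L) ^ 2 := by gcongr; exact one_le_pow₀ one_le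
      _ = 8 * c * L ^ 3 * x ^ 2 := by ring
  have : 1 ≤ c * L ^ 3 := one_le_mul_of_one_le_of_one_le hc (one_le_pow₀ hL.le)
  linarith [Nat.ceil_lt_add_one (show 0 ≤ 8 * c * L / x ^ 2 by positivity)]

theorem card_smallIndepSets_intersectionGraph_le_exp_mul {N : α → Finset β} {P : Finset α}
    {Q : Finset β} {ρ s L x t : ℝ} (d : ℕ) (ht : 0 < t) (ht1 : t ≤ 1) (hρs : ρ ≤ s) (hL : 1 < L)
    (hρL : 2 * L ≤ ρ) (hxL : 1 / L < x) (hx1 : x ≤ 1) (hP : log (#P + 1) ≤ L) (hQ : #Q ≤ ρ * s)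
    (hNQ : ∀ p ∈ P, N p ⊆ Q) (hlin : ∀ p ∈ P, ∀ p' ∈ P, p ≠ p' → #(N p ∩ N p') ≤ 1)
    (hdeg : ∀ p ∈ P, ρ * x - 1 ≤ #(N p)) :
    (#(smallIndepSets (intersectionGraph N) P d) : ℝ) ≤
      exp (9 * (s / ρ) * L ^ 4) * (t⁻¹ ^ d * exp (t * (4 * s / x))) := by
  have hρ : 0 < ρ := by linarith
  have hs : 0 < s := by linarith
  have hx0 : 0 < x := lt_trans (by positivity) hxL
  have one_lt_xL : 1 < x * L := (div_lt_iff₀ (by linarith)).mp hxL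
  set k := ⌈8 * (s / ρ) * L / x ^ 2⌉₊
  have hR : 2 * (ρ * s) / (ρ * x / 2) = 4 * s / x := by field_simp; ring
  have hP' : (#P + 1 : ℝ) ≤ exp L := (log_le_iff_le_exp (by positivity)).mp hP
  have enough_steps : #P * exp (-((ρ * x / 2) ^ 2 / (2 * (ρ * s)) * k)) ≤
      2 * (ρ * s) / (ρ * x / 2) := by
    have : L ≤ (ρ * x / 2) ^ 2 / (2 * (ρ * s)) * k := by
      calc L = (ρ * x / 2) ^ 2 / (2 * (ρ * s)) * (8 * (s / ρ) * L / x ^ 2) := by field_simp; ring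
        _ ≤ _ := by gcongr; exact Nat.le_ceil _
    calc _ ≤ exp L * exp (-L) := by gcongr; linarith
      _ = 1 := by rw [← exp_add, add_neg_cancel, exp_zero]
      _ ≤ 4 * s / x := by rw [le_div_iff₀ hx0]; linarith
      _ = _ := hR.symm
  have hk : (#P + 1 : ℝ) ^ k ≤ exp (9 * (s / ρ) * L ^ 4) := by
    calc (#P + 1 : ℝ) ^ k ≤ exp L ^ k := by gcongr
      _ = exp (k * L) := (exp_nat_mul L k).symm
      _ ≤ exp (9 * (s / ρ) * L ^ 3 * L) := by
          gcongr
          exact natCeil_div_sq_le ((one_le_div hρ).mpr hρs) hL hxL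
      _ = _ := by ring_nf
  have count := card_smallIndepSets_intersectionGraph_le (δ := ρ * x / 2) d k ht ht1 hQ
    (by positivity) (by positivity) hNQ (fun p hp ↦ by nlinarith [hdeg p hp]) hlin enough_steps
  rw [hR] at count
  exact count.trans (by gcongr)

theorem card_smallIndepSets_intersectionGraph_le_exp {N : α → Finset β} {P : Finset α}
    {Q : Finset β} {ρ σ s L : ℝ} {d : ℕ} (hσ : 0 < σ) (hσs : σ ≤ s) (hρs : ρ ≤ s) (hL : 1 < L)
    (hρL : 2 * L ≤ ρ) (hP : log (#P + 1) ≤ L) (hQ : #Q ≤ ρ * s) (hNQ : ∀ p ∈ P, N p ⊆ Q)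
    (hlin : ∀ p ∈ P, ∀ p' ∈ P, p ≠ p' → #(N p ∩ N p') ≤ 1)
    (hdeg : ∀ p ∈ P, ρ * min (d / σ) 1 - 1 ≤ #(N p)) (hd : σ < s → d ≤ σ) :
    (#(smallIndepSets (intersectionGraph N) P d) : ℝ) ≤
      exp (σ * (6 + log (s / σ)) + 9 * (s / ρ) * L ^ 4) := by
  have hs : 0 < s := hσ.trans_le hσs
  set x : ℝ := min (d / σ) 1 with hx
  rcases le_or_gt x (1 / L) with hxL | hxL
  · have hdL : L * d ≤ σ := by
      have := (min_le_iff.mp hxL).resolve_right (by rw [not_le, div_lt_one] <;> linarith)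
      rw [div_le_div_iff₀ hσ (by linarith)] at this
      linarith
    refine (card_smallIndepSets_le_exp _ P d hP).trans (exp_le_exp.mpr ?_)
    have hlog : 0 ≤ log (s / σ) := log_nonneg ((one_le_div hσ).mpr hσs)
    have : 1 ≤ s / ρ * L ^ 4 :=
      one_le_mul_of_one_le_of_one_le ((one_le_div (by linarith)).mpr hρs) (one_le_pow₀ hL.le)
    nlinarith
  have hx0 : 0 < x := lt_trans (by positivity) hxL
  have hx1 : x ≤ 1 := min_le_right _ _
  have ht1 : σ / s * x ^ 2 ≤ 1 :=
    mul_le_one₀ (div_le_one_of_le₀ hσs hs.le) (by positivity) (pow_le_one₀ hx0.le hx1)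
  have hexp : exp (σ / s * x ^ 2 * (4 * s / x)) ≤ exp (4 * σ) := by
    rw [exp_le_exp, show σ / s * x ^ 2 * (4 * s / x) = 4 * σ * x by field_simp]
    exact mul_le_of_le_one_right (by positivity) hx1
  calc _ ≤ exp (9 * (s / ρ) * L ^ 4) *
        ((σ / s * x ^ 2)⁻¹ ^ d * exp (σ / s * x ^ 2 * (4 * s / x))) :=
        card_smallIndepSets_intersectionGraph_le_exp_mul d (by positivity) ht1 hρs hL hρL hxL hx1
          hP hQ hNQ hlin hdeg
    _ ≤ exp (9 * (s / ρ) * L ^ 4) * (exp (σ * (2 + log (s / σ))) * exp (4 * σ)) := by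
        gcongr
        exact inv_pow_le_exp_of_eq_min hσ hσs hx0 hx hd
    _ = _ := by rw [← exp_add, ← exp_add]; ring_nf

end KleitmanWinston

section C4Free

/-! ### `C₄`-free bipartite graphs -/

variable {α β : Type*}

/-- A bipartite graph, given by its set of edges, without a cycle of length four. -/
def IsC4Free (G : Finset (α × β)) : Prop :=
  ∀ u₁ u₂ v₁ v₂, (u₁, v₁) ∈ G → (u₁, v₂) ∈ G → (u₂, v₁) ∈ G → (u₂, v₂) ∈ G → u₁ = u₂ ∨ v₁ = v₂

/-- The `C₄`-free bipartite graphs with parts `U` and `V`. -/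
noncomputable def c4FreeGraphs (U : Finset α) (V : Finset β) : Finset (Finset (α × β)) :=
  {G ∈ (U ×ˢ V).powerset | IsC4Free G}

/-- The neighbourhood of a vertex `u` of the left part. -/
noncomputable def rightNbrs (G : Finset (α × β)) (u : α) : Finset β :=
  {e ∈ G | e.1 = u}.image Prod.snd

/-- The neighbourhood of a vertex `v` of the right part. -/
noncomputable def leftNbrs (G : Finset (α × β)) (v : β) : Finset α :=
  {e ∈ G | e.2 = v}.image Prod.fst

/-- The bipartite graph with its two parts exchanged. -/
def transpose (G : Finset (α × β)) : Finset (β × α) :=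
  G.map (Equiv.prodComm α β).toEmbedding

/-- The graph left after the vertex `v` of the right part is removed. -/
noncomputable def deleteRight (G : Finset (α × β)) (v : β) : Finset (α × β) :=
  {e ∈ G | e.2 ≠ v}

theorem mem_c4FreeGraphs {U : Finset α} {V : Finset β} {G : Finset (α × β)} :
    G ∈ c4FreeGraphs U V ↔ G ⊆ U ×ˢ V ∧ IsC4Free G := by
  rw [c4FreeGraphs, mem_filter, mem_powerset]

theorem mem_rightNbrs {G : Finset (α × β)} {u : α} {v : β} : v ∈ rightNbrs G u ↔ (u, v) ∈ G := by
  simp [rightNbrs]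

theorem mem_leftNbrs {G : Finset (α × β)} {u : α} {v : β} : u ∈ leftNbrs G v ↔ (u, v) ∈ G := by
  simp [leftNbrs]

theorem mem_transpose {G : Finset (α × β)} {u : α} {v : β} :
    (v, u) ∈ transpose G ↔ (u, v) ∈ G := by
  simp [transpose]

theorem mem_deleteRight {G : Finset (α × β)} {u : α} {v w : β} :
    (u, w) ∈ deleteRight G v ↔ (u, w) ∈ G ∧ w ≠ v := by
  simp [deleteRight]

theorem leftNbrs_transpose (G : Finset (α × β)) (u : α) :
    leftNbrs (transpose G) u = rightNbrs G u := by
  ext v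
  rw [mem_leftNbrs, mem_transpose, mem_rightNbrs]

theorem rightNbrs_transpose (G : Finset (α × β)) (v : β) :
    rightNbrs (transpose G) v = leftNbrs G v := by
  ext u
  rw [mem_rightNbrs, mem_transpose, mem_leftNbrs]

theorem transpose_injective : Function.Injective (transpose : Finset (α × β) → Finset (β × α)) :=
  map_injective _

theorem transpose_mem_c4FreeGraphs {U : Finset α} {V : Finset β} {G : Finset (α × β)}
    (hG : G ∈ c4FreeGraphs U V) : transpose G ∈ c4FreeGraphs V U := by
  obtain ⟨hsub, hfree⟩ := mem_c4FreeGraphs.mp hG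
  refine mem_c4FreeGraphs.mpr ⟨fun ⟨v, u⟩ he ↦ ?_, fun v v' u u' h₁ h₂ h₃ h₄ ↦ ?_⟩
  · exact mem_product.mpr (mem_product.mp (hsub (mem_transpose.mp he))).symm
  · rw [mem_transpose] at h₁ h₂ h₃ h₄
    exact (hfree u u' v v' h₁ h₃ h₂ h₄).symm

theorem card_c4FreeGraphs_comm_le (U : Finset α) (V : Finset β) :
    #(c4FreeGraphs U V) ≤ #(c4FreeGraphs V U) :=
  card_le_card_of_injOn transpose (fun _ hG ↦ transpose_mem_c4FreeGraphs hG)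
    transpose_injective.injOn

theorem deleteRight_mem_c4FreeGraphs {U : Finset α} {V : Finset β} {G : Finset (α × β)}
    (hG : G ∈ c4FreeGraphs U V) (v : β) : deleteRight G v ∈ c4FreeGraphs U (V.erase v) := by
  obtain ⟨hsub, hfree⟩ := mem_c4FreeGraphs.mp hG
  refine mem_c4FreeGraphs.mpr ⟨fun ⟨u, w⟩ he ↦ ?_, fun u u' w w' h₁ h₂ h₃ h₄ ↦ ?_⟩
  · obtain ⟨heG, hwv⟩ := mem_deleteRight.mp he
    obtain ⟨hu, hw⟩ := mem_product.mp (hsub heG)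
    exact mem_product.mpr ⟨hu, mem_erase.mpr ⟨hwv, hw⟩⟩
  · exact hfree u u' w w' (mem_deleteRight.mp h₁).1 (mem_deleteRight.mp h₂).1
      (mem_deleteRight.mp h₃).1 (mem_deleteRight.mp h₄).1

theorem card_rightNbrs_le_card_rightNbrs_deleteRight_add_one (G : Finset (α × β)) (v : β) (u : α) :
    #(rightNbrs G u) ≤ #(rightNbrs (deleteRight G v) u) + 1 := by
  have : rightNbrs G u ⊆ insert v (rightNbrs (deleteRight G v) u) := by
    intro w hw
    rw [mem_insert, mem_rightNbrs, mem_deleteRight]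
    rw [mem_rightNbrs] at hw
    tauto
  exact (card_le_card this).trans (card_insert_le _ _)

theorem IsC4Free.card_rightNbrs_inter_le_one {G : Finset (α × β)} (hG : IsC4Free G) {u u' : α}
    (hne : u ≠ u') : #(rightNbrs G u ∩ rightNbrs G u') ≤ 1 := by
  refine card_le_one.mpr fun v hv v' hv' ↦ ?_
  simp only [mem_inter, mem_rightNbrs] at hv hv'
  exact (hG u u' v v' hv.1 hv'.1 hv.2 hv'.2).resolve_left hne

theorem IsC4Free.isIndepSet_leftNbrs {G : Finset (α × β)} (hG : IsC4Free G) (v : β) :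
    (intersectionGraph (rightNbrs (deleteRight G v))).IsIndepSet (leftNbrs G v : Set α) := by
  rintro u hu u' hu' hne ⟨-, hmeet⟩
  obtain ⟨w, hw, hw'⟩ := not_disjoint_iff.mp hmeet
  rw [mem_coe, mem_leftNbrs] at hu hu'
  rw [mem_rightNbrs, mem_deleteRight] at hw hw'
  exact (hG u u' v w hu hw.1 hu' hw'.1).elim hne fun h ↦ hw.2 h.symm

theorem eq_of_deleteRight_eq_of_leftNbrs_eq {G G' : Finset (α × β)} {v : β}
    (hdelete : deleteRight G v = deleteRight G' v) (hnbrs : leftNbrs G v = leftNbrs G' v) :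
    G = G' := by
  ext ⟨u, w⟩
  by_cases hw : w = v
  · rw [hw, ← mem_leftNbrs, ← mem_leftNbrs, hnbrs]
  · have := Finset.ext_iff.mp hdelete (u, w)
    rwa [mem_deleteRight, mem_deleteRight, and_iff_left hw, and_iff_left hw] at this

theorem card_filter_c4FreeGraphs_le (U : Finset α) (V : Finset β) (v : β)
    (cond : Finset (α × β) → ℕ → Prop) {E : ℝ}
    (hE : ∀ G ∈ c4FreeGraphs U (V.erase v), (#{N ∈ U.powerset |
      cond G #N ∧ (intersectionGraph (rightNbrs G)).IsIndepSet N} : ℝ) ≤ E) :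
    (#{G ∈ c4FreeGraphs U V | cond (deleteRight G v) #(leftNbrs G v)} : ℝ) ≤
      E * #(c4FreeGraphs U (V.erase v)) := by
  set extensions : Finset (α × β) → Finset (Finset α) := fun G ↦
    {N ∈ U.powerset | cond G #N ∧ (intersectionGraph (rightNbrs G)).IsIndepSet N}
  have card_le : #{G ∈ c4FreeGraphs U V | cond (deleteRight G v) #(leftNbrs G v)} ≤
      #((c4FreeGraphs U (V.erase v)).sigma extensions) := by
    refine card_le_card_of_injOn (fun G ↦ ⟨deleteRight G v, leftNbrs G v⟩) (fun G hG ↦ ?_)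
      fun G _ G' _ heq ↦ ?_
    · obtain ⟨hGmem, hcond⟩ := mem_filter.mp hG
      obtain ⟨hsub, hfree⟩ := mem_c4FreeGraphs.mp hGmem
      refine mem_sigma.mpr ⟨deleteRight_mem_c4FreeGraphs hGmem v, mem_filter.mpr
        ⟨mem_powerset.mpr fun u hu ↦ ?_, hcond, hfree.isIndepSet_leftNbrs v⟩⟩
      exact (mem_product.mp (hsub (mem_leftNbrs.mp hu))).1
    · simp only [Sigma.mk.injEq, heq_eq_eq] at heq
      exact eq_of_deleteRight_eq_of_leftNbrs_eq heq.1 heq.2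
  rw [card_sigma] at card_le
  calc (#{G ∈ c4FreeGraphs U V | cond (deleteRight G v) #(leftNbrs G v)} : ℝ)
      ≤ ∑ G ∈ c4FreeGraphs U (V.erase v), (#(extensions G) : ℝ) := mod_cast card_le
    _ ≤ ∑ _G ∈ c4FreeGraphs U (V.erase v), E := sum_le_sum hE
    _ = E * #(c4FreeGraphs U (V.erase v)) := by rw [sum_const, nsmul_eq_mul, mul_comm]

theorem card_isIndepSet_filter_card_le (G : SimpleGraph α) (P : Finset α) (cond : ℕ → Prop) {B : ℝ}
    (hB : 0 ≤ B) (h : ∀ d, cond d → (#(smallIndepSets G P d) : ℝ) ≤ B) :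
    (#{I ∈ P.powerset | cond #I ∧ G.IsIndepSet I} : ℝ) ≤ (#P + 1) * B := by
  have subset_biUnion : {I ∈ P.powerset | cond #I ∧ G.IsIndepSet I} ⊆
      ({d ∈ range (#P + 1) | cond d}).biUnion (smallIndepSets G P) := by
    intro I hI
    obtain ⟨hIP, hcond, hindep⟩ := mem_filter.mp hI
    rw [mem_powerset] at hIP
    exact mem_biUnion.mpr ⟨#I, mem_filter.mpr
      ⟨mem_range.mpr (Nat.lt_succ_of_le (card_le_card hIP)), hcond⟩,
      mem_smallIndepSets.mpr ⟨hIP, hindep, le_rfl⟩⟩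
  calc (#{I ∈ P.powerset | cond #I ∧ G.IsIndepSet I} : ℝ)
      ≤ ∑ d ∈ range (#P + 1) with cond d, (#(smallIndepSets G P d) : ℝ) :=
        mod_cast (card_le_card subset_biUnion).trans card_biUnion_le
    _ ≤ ∑ d ∈ range (#P + 1) with cond d, B :=
        sum_le_sum fun d hd ↦ h d (mem_filter.mp hd).2
    _ ≤ ∑ _d ∈ range (#P + 1), B :=
        sum_le_sum_of_subset_of_nonneg (filter_subset _ _) fun _ _ _ ↦ hB
    _ = (#P + 1) * B := by rw [sum_const, card_range, nsmul_eq_mul]; push_cast; rfl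

/-- The right vertex `v` of `G` has a degree so small, compared with the degrees of the left
vertices `U`, that few graphs arise from `G - v` by adding such a vertex. Here `ρ` and `σ` are the
scales of the degrees of left and of right vertices. -/
def IsPeelable (ρ σ s : ℝ) (U : Finset α) (G : Finset (α × β)) (v : β) : Prop :=
  (σ < s → #(leftNbrs G v) ≤ σ) ∧
    ∀ u ∈ U, ρ * min (#(leftNbrs G v) / σ) 1 ≤ #(rightNbrs G u)

/-- The exponential cost of removing one peelable vertex. It includes `L` for the degree of that
vertex and `2 * L` for the choice of the vertex. -/
noncomputable def peelCost (ρ σ s L : ℝ) : ℝ :=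
  3 * L + σ * (6 + log (s / σ)) + 9 * (s / ρ) * L ^ 4

theorem card_filter_isPeelable_le (U : Finset α) (V : Finset β) (v : β) {ρ σ s L : ℝ}
    (hσ : 0 < σ) (hσs : σ ≤ s) (hρs : ρ ≤ s) (hL : 1 < L) (hρL : 2 * L ≤ ρ)
    (hU : log (#U + 1) ≤ L) (hV : #V ≤ ρ * s) :
    (#{G ∈ c4FreeGraphs U V | IsPeelable ρ σ s U G v} : ℝ) ≤
      exp (peelCost ρ σ s L - 2 * L) * #(c4FreeGraphs U (V.erase v)) := by
  obtain ⟨cond, cond_iff⟩ : ∃ cond : Finset (α × β) → ℕ → Prop, ∀ G d, cond G d ↔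
      (σ < s → d ≤ σ) ∧ ∀ u ∈ U, ρ * min (d / σ) 1 - 1 ≤ #(rightNbrs G u) :=
    ⟨_, fun _ _ ↦ Iff.rfl⟩
  have cond_of_isPeelable (G : Finset (α × β)) (hG : IsPeelable ρ σ s U G v) :
      cond (deleteRight G v) #(leftNbrs G v) := by
    refine (cond_iff _ _).mpr ⟨hG.1, fun u hu ↦ ?_⟩
    have : (#(rightNbrs G u) : ℝ) ≤ #(rightNbrs (deleteRight G v) u) + 1 :=
      mod_cast card_rightNbrs_le_card_rightNbrs_deleteRight_add_one G v u
    linarith [hG.2 u hu]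
  refine (Nat.cast_le.mpr (card_le_card fun G hG ↦ ?_)).trans
    (card_filter_c4FreeGraphs_le U V v cond fun G hG ↦ ?_)
  · rw [mem_filter] at hG ⊢
    exact ⟨hG.1, cond_of_isPeelable G hG.2⟩
  obtain ⟨hsub, hfree⟩ := mem_c4FreeGraphs.mp hG
  have extensions_le := card_isIndepSet_filter_card_le (intersectionGraph (rightNbrs G)) U (cond G)
    (exp_nonneg _) fun d hd ↦ card_smallIndepSets_intersectionGraph_le_exp hσ hσs hρs hL hρL hU
      (hV.trans' (Nat.cast_le.mpr card_erase_le))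
      (fun u _ w hw ↦ (mem_product.mp (hsub (mem_rightNbrs.mp hw))).2)
      (fun u _ u' _ ↦ hfree.card_rightNbrs_inter_le_one)
      ((cond_iff _ _).mp hd).2 ((cond_iff _ _).mp hd).1
  refine extensions_le.trans ?_
  calc _ ≤ exp L * exp (σ * (6 + log (s / σ)) + 9 * (s / ρ) * L ^ 4) := by
        gcongr
        exact (log_le_iff_le_exp (by positivity)).mp hU
    _ = exp (peelCost ρ σ s L - 2 * L) := by rw [← exp_add, peelCost]; ring_nf

theorem card_filter_isPeelable_transpose_le (U : Finset α) (V : Finset β) (u : α) {ρ σ s L : ℝ}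
    (hσ : 0 < σ) (hσs : σ ≤ s) (hρs : ρ ≤ s) (hL : 1 < L) (hρL : 2 * L ≤ ρ)
    (hV : log (#V + 1) ≤ L) (hU : #U ≤ ρ * s) :
    (#{G ∈ c4FreeGraphs U V | IsPeelable ρ σ s V (transpose G) u} : ℝ) ≤
      exp (peelCost ρ σ s L - 2 * L) * #(c4FreeGraphs (U.erase u) V) := by
  have card_le : #{G ∈ c4FreeGraphs U V | IsPeelable ρ σ s V (transpose G) u} ≤
      #{G ∈ c4FreeGraphs V U | IsPeelable ρ σ s V G u} := by
    refine card_le_card_of_injOn transpose (fun G hG ↦ ?_) transpose_injective.injOn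
    obtain ⟨hGmem, hpeel⟩ := mem_filter.mp hG
    exact mem_filter.mpr ⟨transpose_mem_c4FreeGraphs hGmem, hpeel⟩
  calc (#{G ∈ c4FreeGraphs U V | IsPeelable ρ σ s V (transpose G) u} : ℝ)
      ≤ #{G ∈ c4FreeGraphs V U | IsPeelable ρ σ s V G u} := mod_cast card_le
    _ ≤ exp (peelCost ρ σ s L - 2 * L) * #(c4FreeGraphs V (U.erase u)) :=
        card_filter_isPeelable_le V U u hσ hσs hρs hL hρL hV hU
    _ ≤ exp (peelCost ρ σ s L - 2 * L) * #(c4FreeGraphs (U.erase u) V) := by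
        gcongr
        exact card_c4FreeGraphs_comm_le _ _

/-- A right vertex `v` of minimum degree is peelable, unless some left vertex `u` has a degree
small enough for `u` to be peelable. -/
theorem exists_isPeelable {U : Finset α} {V : Finset β} (G : Finset (α × β)) {r s : ℝ}
    (hr : 0 < r) (hs : 0 < s) (hUV : G ⊆ U ×ˢ V) (hne : U.Nonempty ∨ V.Nonempty) :
    (∃ v ∈ V, IsPeelable r s s U G v) ∨ ∃ u ∈ U, IsPeelable s r s V (transpose G) u := by
  rcases V.eq_empty_or_nonempty with rfl | hV
  · obtain ⟨u, hu⟩ := hne.resolve_right not_nonempty_empty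
    have : G = ∅ := subset_empty.mp (product_empty U ▸ hUV)
    exact Or.inr ⟨u, hu, fun _ ↦ by simp [this, transpose, leftNbrs, hr.le], by simp⟩
  obtain ⟨v₀, hv₀, hmin⟩ := exists_min_image V (fun v ↦ #(leftNbrs G v)) hV
  by_cases hpeel : ∀ u ∈ U, r * min (#(leftNbrs G v₀) / s) 1 ≤ #(rightNbrs G u)
  · exact Or.inl ⟨v₀, hv₀, fun h ↦ absurd h (lt_irrefl s), hpeel⟩
  push Not at hpeel
  obtain ⟨u, hu, hlt⟩ := hpeel
  rw [mul_min_of_nonneg _ _ hr.le, lt_min_iff, mul_one] at hlt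
  refine Or.inr ⟨u, hu, fun _ ↦ by rw [leftNbrs_transpose]; exact hlt.2.le, fun v hv ↦ ?_⟩
  rw [leftNbrs_transpose, rightNbrs_transpose]
  calc s * min (#(rightNbrs G u) / r) 1 ≤ s * (#(rightNbrs G u) / r) := by
        gcongr
        exact min_le_left _ _
    _ ≤ s * (r * (#(leftNbrs G v₀) / s) / r) := by gcongr; exact hlt.1.le
    _ = #(leftNbrs G v₀) := by field_simp
    _ ≤ #(leftNbrs G v) := mod_cast hmin v hv

theorem card_c4FreeGraphs_le_sum {U : Finset α} {V : Finset β} {r s : ℝ} (hr : 0 < r) (hs : 0 < s)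
    (hne : U.Nonempty ∨ V.Nonempty) :
    #(c4FreeGraphs U V) ≤ ∑ v ∈ V, #{G ∈ c4FreeGraphs U V | IsPeelable r s s U G v} +
      ∑ u ∈ U, #{G ∈ c4FreeGraphs U V | IsPeelable s r s V (transpose G) u} := by
  have subset_union : c4FreeGraphs U V ⊆
      V.biUnion (fun v ↦ {G ∈ c4FreeGraphs U V | IsPeelable r s s U G v}) ∪
      U.biUnion (fun u ↦ {G ∈ c4FreeGraphs U V | IsPeelable s r s V (transpose G) u}) := by
    intro G hG
    rcases exists_isPeelable G hr hs (mem_c4FreeGraphs.mp hG).1 hne with ⟨v, hv, h⟩ | ⟨u, hu, h⟩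
    · exact mem_union_left _ (mem_biUnion.mpr ⟨v, hv, mem_filter.mpr ⟨hG, h⟩⟩)
    · exact mem_union_right _ (mem_biUnion.mpr ⟨u, hu, mem_filter.mpr ⟨hG, h⟩⟩)
  exact (card_le_card subset_union).trans <| (card_union_le _ _).trans <|
    Nat.add_le_add card_biUnion_le card_biUnion_le

theorem card_c4FreeGraphs_le_of_isPeelable_le {U : Finset α} {V : Finset β} {r s L M : ℝ}
    (hr : 0 < r) (hs : 0 < s) (hne : U.Nonempty ∨ V.Nonempty) (hUL : log (#U + 1) ≤ L)
    (hVL : log (#V + 1) ≤ L)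
    (peel_right : ∀ v ∈ V, (#{G ∈ c4FreeGraphs U V | IsPeelable r s s U G v} : ℝ) ≤
      exp (-(2 * L)) * M)
    (peel_left : ∀ u ∈ U, (#{G ∈ c4FreeGraphs U V | IsPeelable s r s V (transpose G) u} : ℝ) ≤
      exp (-(2 * L)) * M)
    (hM : 0 ≤ M) :
    (#(c4FreeGraphs U V) : ℝ) ≤ M := by
  have vertices_le : (#V + #U : ℝ) ≤ exp (2 * L) := by
    rw [log_le_iff_le_exp (by positivity)] at hUL hVL
    rw [two_mul, exp_add]
    nlinarith [sq_nonneg (exp L - 1)]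
  calc (#(c4FreeGraphs U V) : ℝ)
      ≤ ∑ v ∈ V, (#{G ∈ c4FreeGraphs U V | IsPeelable r s s U G v} : ℝ) +
        ∑ u ∈ U, (#{G ∈ c4FreeGraphs U V | IsPeelable s r s V (transpose G) u} : ℝ) :=
        mod_cast card_c4FreeGraphs_le_sum hr hs hne
    _ ≤ ∑ _v ∈ V, exp (-(2 * L)) * M + ∑ _u ∈ U, exp (-(2 * L)) * M :=
        add_le_add (sum_le_sum peel_right) (sum_le_sum peel_left)
    _ = (#V + #U) * (exp (-(2 * L)) * M) := by
        rw [sum_const, sum_const, nsmul_eq_mul, nsmul_eq_mul, add_mul]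
    _ ≤ exp (2 * L) * (exp (-(2 * L)) * M) := by gcongr
    _ = M := by rw [← mul_assoc, ← exp_add, add_neg_cancel, exp_zero, one_mul]

theorem card_c4FreeGraphs_le_exp_peelCost {r s L : ℝ} (hr : 0 < r) (hrs : r ≤ s) (hL : 1 < L)
    (hrL : 2 * L ≤ r) (U : Finset α) (V : Finset β) (hU : #U ≤ s * s) (hV : #V ≤ r * s)
    (hUL : log (#U + 1) ≤ L) (hVL : log (#V + 1) ≤ L) :
    (#(c4FreeGraphs U V) : ℝ) ≤ exp (#V * peelCost r s s L + #U * peelCost s r s L) := by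
  have hs : 0 < s := hr.trans_le hrs
  induction hm : #U + #V generalizing U V with
  | zero =>
    obtain ⟨hU0, hV0⟩ := Nat.add_eq_zero_iff.mp hm
    rw [card_eq_zero] at hU0 hV0
    subst hU0 hV0
    have : #(c4FreeGraphs (∅ : Finset α) (∅ : Finset β)) ≤ 1 := card_filter_le _ _
    simpa using this
  | succ m ih =>
    set M := exp (#V * peelCost r s s L + #U * peelCost s r s L)
    have hne : U.Nonempty ∨ V.Nonempty := by
      by_contra! h
      simp [h.1, h.2] at hm
    have log_mono {k l : ℕ} (hkl : k ≤ l) (hl : log (l + 1) ≤ L) : log (k + 1) ≤ L :=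
      (log_le_log (by positivity) (by gcongr)).trans hl
    have peel_right (v : β) (hv : v ∈ V) :
        (#{G ∈ c4FreeGraphs U V | IsPeelable r s s U G v} : ℝ) ≤ exp (-(2 * L)) * M := by
      have hcard : (#(V.erase v) : ℝ) + 1 = #V := mod_cast card_erase_add_one hv
      refine (card_filter_isPeelable_le U V v hs le_rfl hrs hL hrL hUL hV).trans ?_
      grw [ih U (V.erase v) hU (by linarith) hUL (log_mono card_erase_le hVL)
        (by have := card_erase_add_one hv; omega), ← exp_add, ← exp_add, ← hcard]
      ring_nf
      rfl
    have peel_left (u : α) (hu : u ∈ U) :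
        (#{G ∈ c4FreeGraphs U V | IsPeelable s r s V (transpose G) u} : ℝ) ≤
          exp (-(2 * L)) * M := by
      have hcard : (#(U.erase u) : ℝ) + 1 = #U := mod_cast card_erase_add_one hu
      refine (card_filter_isPeelable_transpose_le U V u hr hrs le_rfl hL (hrL.trans hrs) hVL
        hU).trans ?_
      grw [ih (U.erase u) V (by linarith) hV (log_mono card_erase_le hUL) hVL
        (by have := card_erase_add_one hu; omega), ← exp_add, ← exp_add, ← hcard]
      ring_nf
      rfl
    exact card_c4FreeGraphs_le_of_isPeelable_le hr hs hne hUL hVL peel_right peel_left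
      (exp_nonneg _)

theorem card_c4FreeGraphs_le_exp {a b L : ℝ} {U : Finset α} {V : Finset β} (hb : 0 < b)
    (hba : b ≤ a) (hL : 1 < L) (hbL : 2 * L * √a ≤ b) (haL : log (a + 1) ≤ L) (hU : #U ≤ a)
    (hV : #V ≤ b) :
    (#(c4FreeGraphs U V) : ℝ) ≤ exp (b * √a * (12 + log (a / b)) + 24 * a * L ^ 4) := by
  have ha : 0 < a := hb.trans_le hba
  set s := √a
  have hs : 0 < s := sqrt_pos.mpr ha
  have hss : s * s = a := mul_self_sqrt ha.le
  set r := b / s with hr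
  have hrs : r * s = b := div_mul_cancel₀ b hs.ne'
  have hsr : s / r = a / b := by rw [hr, ← hss]; field_simp
  have log_card_le {k : ℕ} (hk : (k : ℝ) ≤ a) : log (k + 1) ≤ L :=
    (log_le_log (by positivity) (by gcongr)).trans haL
  have hlog : 0 ≤ log (a / b) := log_nonneg ((one_le_div hb).mpr hba)
  have hL4 : L ≤ L ^ 4 := le_self_pow₀ hL.le (by norm_num)
  have costV : peelCost r s s L ≤ 6 * s + (3 + 9 * (a / b)) * L ^ 4 := by
    rw [peelCost, div_self hs.ne', log_one, hsr]
    linarith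
  have costU : peelCost s r s L ≤ r * (6 + log (a / b)) + 12 * L ^ 4 := by
    rw [peelCost, div_self hs.ne', hsr]
    linarith
  refine (card_c4FreeGraphs_le_exp_peelCost (by positivity)
    ((div_le_iff₀ hs).mpr (hss ▸ hba)) hL ((le_div_iff₀ hs).mpr hbL) U V (by rwa [hss])
    (by rwa [hrs]) (log_card_le hU) (log_card_le (hV.trans hba))).trans (exp_le_exp.mpr ?_)
  calc #V * peelCost r s s L + #U * peelCost s r s L
      ≤ #V * (6 * s + (3 + 9 * (a / b)) * L ^ 4) +
          #U * (r * (6 + log (a / b)) + 12 * L ^ 4) := by gcongr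
    _ ≤ b * (6 * s + (3 + 9 * (a / b)) * L ^ 4) + a * (r * (6 + log (a / b)) + 12 * L ^ 4) := by
        gcongr
    _ = b * s * (12 + log (a / b)) + (3 * b + 21 * a) * L ^ 4 := by
        have har : a * r = b * s := by rw [← hss, ← hrs]; ring
        have hab : b * (a / b) = a := by field_simp
        linear_combination 9 * L ^ 4 * hab + (6 + log (a / b)) * har
    _ ≤ b * s * (12 + log (a / b)) + 24 * a * L ^ 4 := by gcongr; linarith

end C4Free

section Sieve

/-! ### Integers without prime factors in an interval -/

theorem sum_vonMangoldt_div_le {X : ℕ} {F : Finset ℕ} (hF : F ⊆ Icc 1 X) {l : ℕ} (hl : 0 < l) :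
    ∑ m ∈ F with l ∣ m, ArithmeticFunction.vonMangoldt (m / l) ≤ 6 * X * (1 / l) := by
  have div_injOn : Set.InjOn (· / l) ({m ∈ F | l ∣ m} : Finset ℕ) := by
    intro m hm m' hm' hdiv
    rw [← Nat.div_mul_cancel (mem_filter.mp hm).2, ← Nat.div_mul_cancel (mem_filter.mp hm').2]
    exact congrArg (· * l) hdiv
  have image_subset : image (· / l) {m ∈ F | l ∣ m} ⊆ Ioc 0 ⌊(X : ℝ) / l⌋₊ := by
    intro d hd
    obtain ⟨m, hm, rfl⟩ := mem_image.mp hd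
    obtain ⟨hmF, hlm⟩ := mem_filter.mp hm
    obtain ⟨hm1, hmX⟩ := mem_Icc.mp (hF hmF)
    rw [Nat.floor_div_natCast, Nat.floor_natCast, mem_Ioc]
    exact ⟨Nat.div_pos (Nat.le_of_dvd hm1 hlm) hl, Nat.div_le_div_right hmX⟩
  have log_four_le : log 4 ≤ 2 := by
    rw [show (4 : ℝ) = 2 ^ 2 by norm_num, log_pow]
    push_cast
    linarith [log_two_lt_d9]
  calc ∑ m ∈ F with l ∣ m, ArithmeticFunction.vonMangoldt (m / l)
      = ∑ d ∈ image (· / l) {m ∈ F | l ∣ m}, ArithmeticFunction.vonMangoldt d :=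
        (sum_image div_injOn).symm
    _ ≤ Chebyshev.psi ((X : ℝ) / l) := sum_le_sum_of_subset_of_nonneg image_subset
        fun _ _ _ ↦ ArithmeticFunction.vonMangoldt_nonneg
    _ ≤ (log 4 + 4) * ((X : ℝ) / l) := Chebyshev.psi_le_const_mul_self (by positivity)
    _ ≤ 6 * ((X : ℝ) / l) := by gcongr; linarith
    _ = 6 * X * (1 / l) := by ring

theorem sum_log_le_of_dvd_mem {X : ℕ} {F : Finset ℕ} (hF : F ⊆ Icc 1 X)
    (hdvd : ∀ m ∈ F, ∀ d, d ∣ m → d ∈ F) :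
    ∑ m ∈ F, log m ≤ 6 * X * ∑ l ∈ F, (1 / l : ℝ) := by
  have filter_dvd_eq (m : ℕ) (hm : m ∈ F) : {l ∈ F | l ∣ m} = m.divisors := by
    ext l
    simp only [mem_filter, Nat.mem_divisors]
    exact ⟨fun h ↦ ⟨h.2, Nat.ne_of_gt (mem_Icc.mp (hF hm)).1⟩, fun h ↦ ⟨hdvd m hm l h.1, h.1⟩⟩
  calc ∑ m ∈ F, log m
      = ∑ m ∈ F, ∑ l ∈ F with l ∣ m, ArithmeticFunction.vonMangoldt (m / l) := by
        refine sum_congr rfl fun m hm ↦ ?_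
        rw [filter_dvd_eq m hm, Nat.sum_div_divisors, ArithmeticFunction.vonMangoldt_sum]
    _ = ∑ l ∈ F, ∑ m ∈ F with l ∣ m, ArithmeticFunction.vonMangoldt (m / l) := by
        simp only [sum_filter]
        exact sum_comm
    _ ≤ ∑ l ∈ F, 6 * X * (1 / l : ℝ) :=
        sum_le_sum fun l hl ↦ sum_vonMangoldt_div_le hF (mem_Icc.mp (hF hl)).1
    _ = 6 * X * ∑ l ∈ F, (1 / l : ℝ) := (mul_sum ..).symm

theorem card_mul_log_le_of_dvd_mem {X : ℕ} {F : Finset ℕ} (hF : F ⊆ Icc 1 X)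
    (hdvd : ∀ m ∈ F, ∀ d, d ∣ m → d ∈ F) :
    #F * log X ≤ 7 * X * ∑ l ∈ F, (1 / l : ℝ) := by
  have log_le (m : ℕ) (hm : m ∈ F) : log X ≤ log m + X * (1 / m) := by
    obtain ⟨hm1, hmX⟩ := mem_Icc.mp (hF hm)
    have hm0 : (0 : ℝ) < m := mod_cast hm1
    have hX0 : (0 : ℝ) < X := mod_cast hm1.trans hmX
    have := log_le_sub_one_of_pos (div_pos hX0 hm0)
    rw [log_div hX0.ne' hm0.ne'] at this
    rw [mul_one_div]
    linarith
  calc #F * log X = ∑ _m ∈ F, log X := by rw [sum_const, nsmul_eq_mul]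
    _ ≤ ∑ m ∈ F, (log m + X * (1 / m)) := sum_le_sum log_le
    _ = ∑ m ∈ F, log m + X * ∑ l ∈ F, (1 / l : ℝ) := by rw [sum_add_distrib, mul_sum]
    _ ≤ 6 * X * ∑ l ∈ F, (1 / l : ℝ) + X * ∑ l ∈ F, (1 / l : ℝ) := by
        gcongr
        exact sum_log_le_of_dvd_mem hF hdvd
    _ = 7 * X * ∑ l ∈ F, (1 / l : ℝ) := by ring

theorem inv_one_sub_le_exp_two_mul {x : ℝ} (hx0 : 0 ≤ x) (hx : x ≤ 1 / 2) :
    (1 - x)⁻¹ ≤ exp (2 * x) :=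
  calc (1 - x)⁻¹ ≤ 2 * x + 1 := by
        rw [inv_le_iff_one_le_mul₀ (by linarith)]
        nlinarith
    _ ≤ exp (2 * x) := add_one_le_exp _

theorem sum_one_div_le_prod_of_primeFactors {F s : Finset ℕ}
    (hF : ∀ m ∈ F, ∀ p, p.Prime → p ∣ m → p ∈ s) :
    ∑ l ∈ F, (1 / l : ℝ) ≤ ∏ p ∈ s with p.Prime, (1 - 1 / p : ℝ)⁻¹ := by
  let f : ℕ →* ℝ := invMonoidHom.comp (Nat.castRingHom ℝ)
  have norm_lt_one {p : ℕ} (hp : p.Prime) : ‖f p‖ < 1 := by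
    simpa [f] using inv_lt_one_of_one_lt₀ (Nat.one_lt_cast.mpr hp.one_lt)
  have euler := (EulerProduct.summable_and_hasSum_factoredNumbers_prod_filter_prime_geometric
    norm_lt_one s).2
  have mem_factored (m : ℕ) (hm : m ∈ F) : m ∈ Nat.factoredNumbers s :=
    Nat.mem_factoredNumbers'.mpr (hF m hm)
  calc ∑ l ∈ F, (1 / l : ℝ) = ∑ m ∈ F.subtype (· ∈ Nat.factoredNumbers s), f m := by
        rw [sum_subtype_of_mem f mem_factored]
        simp [f]
    _ ≤ ∏ p ∈ s with p.Prime, (1 - f p)⁻¹ := sum_le_hasSum _ (fun m _ ↦ by simp [f]) euler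
    _ = ∏ p ∈ s with p.Prime, (1 - 1 / p : ℝ)⁻¹ := by simp [f]

theorem sum_one_div_le_exp_of_primeFactors {F s : Finset ℕ}
    (hF : ∀ m ∈ F, ∀ p, p.Prime → p ∣ m → p ∈ s) :
    ∑ l ∈ F, (1 / l : ℝ) ≤ exp (2 * ∑ p ∈ s with p.Prime, (1 / p : ℝ)) := by
  refine (sum_one_div_le_prod_of_primeFactors hF).trans ?_
  rw [mul_sum, exp_sum]
  have one_div_le {p : ℕ} (hp : p.Prime) : (1 / p : ℝ) ≤ 1 / 2 :=
    one_div_le_one_div_of_le two_pos (mod_cast hp.two_le)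
  refine prod_le_prod (fun p hp ↦ ?_) fun p hp ↦ ?_
  · exact inv_nonneg.mpr (by linarith [one_div_le (mem_filter.mp hp).2])
  · exact inv_one_sub_le_exp_two_mul (by positivity) (one_div_le (mem_filter.mp hp).2)

theorem mul_card_le_of_prime_of_log_eq {s : Finset ℕ} {j : ℕ}
    (hs : ∀ p ∈ s, p.Prime ∧ Nat.log 2 p = j) : j * #s ≤ 4 * 2 ^ j := by
  have pow_le : (2 ^ j) ^ #s ≤ 4 ^ 2 ^ (j + 1) :=
    calc (2 ^ j) ^ #s ≤ ∏ p ∈ s, p := pow_card_le_prod s _ _ fun p hp ↦ by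
          rw [← (hs p hp).2]
          exact Nat.pow_log_le_self 2 (hs p hp).1.ne_zero
      _ ≤ primorial (2 ^ (j + 1)) := by
          refine prod_le_prod_of_subset_of_one_le' (fun p hp ↦ ?_)
            fun p hp _ ↦ (mem_filter.mp hp).2.one_le
          rw [mem_filter, mem_range, ← (hs p hp).2]
          exact ⟨Nat.lt_succ_of_lt (Nat.lt_pow_succ_log_self one_lt_two p), (hs p hp).1⟩
      _ ≤ 4 ^ 2 ^ (j + 1) := primorial_le_four_pow _
  rw [show 4 = 2 ^ 2 by norm_num, ← pow_mul, ← pow_mul, Nat.pow_le_pow_iff_right one_lt_two,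
    pow_succ] at pow_le
  omega

theorem sum_one_div_le_of_prime_of_log_eq {s : Finset ℕ} {j : ℕ}
    (hs : ∀ p ∈ s, p.Prime ∧ Nat.log 2 p = j) : ∑ p ∈ s, (1 / p : ℝ) ≤ 4 / j := by
  rcases s.eq_empty_or_nonempty with rfl | ⟨q, hq⟩
  · simpa using by positivity
  have hj : 0 < j := (hs q hq).2 ▸ Nat.log_pos one_lt_two (hs q hq).1.two_le
  calc ∑ p ∈ s, (1 / p : ℝ) ≤ ∑ _p ∈ s, (1 / 2 ^ j : ℝ) := by
        refine sum_le_sum fun p hp ↦ one_div_le_one_div_of_le (by positivity) ?_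
        rw [← (hs p hp).2]
        exact_mod_cast Nat.pow_log_le_self 2 (hs p hp).1.ne_zero
    _ = #s / 2 ^ j := by rw [sum_const, nsmul_eq_mul, mul_one_div]
    _ ≤ 4 / j := by
        rw [div_le_div_iff₀ (by positivity) (by positivity), mul_comm]
        exact_mod_cast mul_card_le_of_prime_of_log_eq hs

theorem sum_one_div_le_of_prime_of_log_mem {s J : Finset ℕ}
    (hs : ∀ p ∈ s, p.Prime ∧ Nat.log 2 p ∈ J) : ∑ p ∈ s, (1 / p : ℝ) ≤ ∑ j ∈ J, (4 / j : ℝ) := by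
  rw [← sum_fiberwise_of_maps_to fun p hp ↦ (hs p hp).2]
  refine sum_le_sum fun j _ ↦ sum_one_div_le_of_prime_of_log_eq fun p hp ↦ ?_
  obtain ⟨hps, hpj⟩ := mem_filter.mp hp
  exact ⟨(hs p hps).1, hpj⟩

theorem sum_one_div_le_of_prime_of_lt_two_pow {s : Finset ℕ} {k : ℕ}
    (hs : ∀ p ∈ s, p.Prime ∧ p < 2 ^ k) : ∑ p ∈ s, (1 / p : ℝ) ≤ 4 * (1 + log (k + 1)) := by
  have log_mem (p : ℕ) (hp : p ∈ s) : p.Prime ∧ Nat.log 2 p ∈ Icc 1 k := by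
    obtain ⟨hprime, hlt⟩ := hs p hp
    exact ⟨hprime, mem_Icc.mpr ⟨Nat.log_pos one_lt_two hprime.two_le,
      (Nat.log_lt_of_lt_pow hprime.ne_zero hlt).le⟩⟩
  have log_le : log k ≤ log (k + 1) := by
    rcases k.eq_zero_or_pos with rfl | hk
    · simp
    · exact log_le_log (mod_cast hk) (by linarith)
  calc ∑ p ∈ s, (1 / p : ℝ) ≤ ∑ j ∈ Icc 1 k, (4 / j : ℝ) :=
        sum_one_div_le_of_prime_of_log_mem log_mem
    _ = 4 * (harmonic k : ℝ) := by simp [harmonic_eq_sum_Icc, mul_sum, div_eq_mul_inv]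
    _ ≤ 4 * (1 + log k) := by gcongr; exact harmonic_le_one_add_log k
    _ ≤ 4 * (1 + log (k + 1)) := by gcongr

theorem log_two_lt_mul_log_two_of_lt_pow {n p e : ℕ} (hp : 2 ≤ p) (hn : n ≠ 0) (hnp : n < p ^ e) :
    Nat.log 2 n < 2 * e * Nat.log 2 p := by
  have hj : 1 ≤ Nat.log 2 p := Nat.log_pos one_lt_two hp
  have pow_lt : 2 ^ Nat.log 2 n < 2 ^ ((Nat.log 2 p + 1) * e) :=
    calc 2 ^ Nat.log 2 n ≤ n := Nat.pow_log_le_self 2 hn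
      _ < p ^ e := hnp
      _ ≤ (2 ^ (Nat.log 2 p + 1)) ^ e :=
          Nat.pow_le_pow_left (Nat.lt_pow_succ_log_self one_lt_two p).le e
      _ = 2 ^ ((Nat.log 2 p + 1) * e) := (pow_mul ..).symm
  have := (Nat.pow_lt_pow_iff_right one_lt_two).mp pow_lt
  nlinarith

theorem sum_one_div_le_of_prime_of_lt_pow {s : Finset ℕ} {n e : ℕ}
    (hs : ∀ p ∈ s, p.Prime ∧ n < p ^ e ∧ p ≤ n) : ∑ p ∈ s, (1 / p : ℝ) ≤ 8 * e := by
  set M := Nat.log 2 n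
  have log_mem (p : ℕ) (hp : p ∈ s) :
      p.Prime ∧ Nat.log 2 p ∈ {j ∈ Icc 1 M | M + 1 ≤ 2 * e * j} := by
    obtain ⟨hprime, hlt, hle⟩ := hs p hp
    exact ⟨hprime, mem_filter.mpr ⟨mem_Icc.mpr ⟨Nat.log_pos one_lt_two hprime.two_le,
      Nat.log_mono_right hle⟩,
      log_two_lt_mul_log_two_of_lt_pow hprime.two_le (hprime.pos.trans_le hle).ne' hlt⟩⟩
  have term_le (j : ℕ) (hj : j ∈ {j ∈ Icc 1 M | M + 1 ≤ 2 * e * j}) :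
      (4 / j : ℝ) ≤ 8 * e / (M + 1) := by
    obtain ⟨hjM, hMj⟩ := mem_filter.mp hj
    have hj0 : (0 : ℝ) < j := mod_cast (mem_Icc.mp hjM).1
    have : (M : ℝ) + 1 ≤ 2 * e * j := mod_cast hMj
    rw [div_le_div_iff₀ hj0 (by positivity)]
    linarith
  have card_le : #{j ∈ Icc 1 M | M + 1 ≤ 2 * e * j} ≤ M + 1 :=
    (card_filter_le _ _).trans (by simp)
  calc ∑ p ∈ s, (1 / p : ℝ) ≤ ∑ j ∈ Icc 1 M with M + 1 ≤ 2 * e * j, (4 / j : ℝ) :=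
        sum_one_div_le_of_prime_of_log_mem log_mem
    _ ≤ #{j ∈ Icc 1 M | M + 1 ≤ 2 * e * j} * (8 * e / (M + 1)) := by
        rw [← nsmul_eq_mul]
        exact sum_le_card_nsmul _ _ _ term_le
    _ ≤ (M + 1) * (8 * e / (M + 1)) := by gcongr; exact_mod_cast card_le
    _ = 8 * e := by field_simp

/-- The `m ≤ X` without prime factors in `[2 ^ k, n ^ (1 / e)]`. -/
noncomputable def gapNumbers (n e X k : ℕ) : Finset ℕ :=
  {m ∈ Icc 1 X | ∀ p, p.Prime → p ∣ m → p < 2 ^ k ∨ n < p ^ e}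

theorem mem_gapNumbers {n e X k m : ℕ} : m ∈ gapNumbers n e X k ↔
    (1 ≤ m ∧ m ≤ X) ∧ ∀ p, p.Prime → p ∣ m → p < 2 ^ k ∨ n < p ^ e := by
  rw [gapNumbers, mem_filter, mem_Icc]

theorem mem_gapNumbers_of_dvd {n e X k m d : ℕ} (hm : m ∈ gapNumbers n e X k) (hd : d ∣ m) :
    d ∈ gapNumbers n e X k := by
  obtain ⟨⟨hm1, hmX⟩, hgap⟩ := mem_gapNumbers.mp hm
  exact mem_gapNumbers.mpr ⟨⟨Nat.pos_of_dvd_of_pos hd hm1, (Nat.le_of_dvd hm1 hd).trans hmX⟩,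
    fun p hp hpd ↦ hgap p hp (hpd.trans hd)⟩

theorem sum_one_div_gapNumbers_le {n X : ℕ} (e k : ℕ) (hX : X ≤ n) :
    ∑ l ∈ gapNumbers n e X k, (1 / l : ℝ) ≤ exp (8 + 16 * e) * (k + 1) ^ 8 := by
  have prime_mem (m : ℕ) (hm : m ∈ gapNumbers n e X k) (p : ℕ) (hp : p.Prime) (hpm : p ∣ m) :
      p ∈ {p ∈ Icc 1 n | p < 2 ^ k} ∪ {p ∈ Icc 1 n | n < p ^ e} := by
    obtain ⟨⟨hm1, hmX⟩, hgap⟩ := mem_gapNumbers.mp hm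
    have hpn : p ∈ Icc 1 n :=
      mem_Icc.mpr ⟨hp.one_le, (Nat.le_of_dvd hm1 hpm).trans (hmX.trans hX)⟩
    exact mem_union.mpr ((hgap p hp hpm).imp (mem_filter.mpr ⟨hpn, ·⟩) (mem_filter.mpr ⟨hpn, ·⟩))
  have sum_prime_le : ∑ p ∈ {p ∈ Icc 1 n | p < 2 ^ k} ∪ {p ∈ Icc 1 n | n < p ^ e} with p.Prime,
      (1 / p : ℝ) ≤ 4 * (1 + log (k + 1)) + 8 * e := by
    rw [filter_union]
    have sum_small_le := sum_one_div_le_of_prime_of_lt_two_pow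
      (s := {p ∈ {p ∈ Icc 1 n | p < 2 ^ k} | p.Prime}) (k := k) fun p hp ↦
      ⟨(mem_filter.mp hp).2, (mem_filter.mp (mem_filter.mp hp).1).2⟩
    have sum_large_le := sum_one_div_le_of_prime_of_lt_pow
      (s := {p ∈ {p ∈ Icc 1 n | n < p ^ e} | p.Prime}) (n := n) (e := e) fun p hp ↦ by
        simp only [mem_filter, mem_Icc] at hp
        exact ⟨hp.2, hp.1.2, hp.1.1.2⟩
    rw [← union_sdiff_self_eq_union, sum_union disjoint_sdiff]
    refine add_le_add sum_small_le (sum_large_le.trans' ?_)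
    exact sum_le_sum_of_subset_of_nonneg sdiff_subset fun _ _ _ ↦ by positivity
  calc ∑ l ∈ gapNumbers n e X k, (1 / l : ℝ)
      ≤ exp (2 * (4 * (1 + log (k + 1)) + 8 * e)) :=
        (sum_one_div_le_exp_of_primeFactors prime_mem).trans (by gcongr)
    _ = exp (8 + 16 * e) * exp (log (k + 1)) ^ 8 := by
        rw [← exp_nat_mul, ← exp_add]
        push_cast
        ring_nf
    _ = exp (8 + 16 * e) * (k + 1) ^ 8 := by rw [exp_log (by positivity)]

theorem card_gapNumbers_mul_log_le {n X : ℕ} (e k : ℕ) (hX : X ≤ n) :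
    #(gapNumbers n e X k) * log X ≤ 7 * exp (8 + 16 * e) * X * (k + 1) ^ 8 :=
  calc #(gapNumbers n e X k) * log X ≤ 7 * X * ∑ l ∈ gapNumbers n e X k, (1 / l : ℝ) :=
        card_mul_log_le_of_dvd_mem (filter_subset _ _) fun _ hm _ hd ↦ mem_gapNumbers_of_dvd hm hd
    _ ≤ 7 * X * (exp (8 + 16 * e) * (k + 1) ^ 8) := by
        gcongr
        exact sum_one_div_gapNumbers_le e k hX
    _ = 7 * exp (8 + 16 * e) * X * (k + 1) ^ 8 := by ring

end Sieve

section MulSidonSubsets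

/-! ### Multiplicative Sidon sets -/

/-- The multiplicative Sidon subsets of `K`, so that `S n = #(mulSidonSubsets (Icc 1 n))`. -/
noncomputable def mulSidonSubsets (K : Finset ℕ) : Finset (Finset ℕ) :=
  {A ∈ K.powerset | MulSidon A}

theorem mem_mulSidonSubsets {K A : Finset ℕ} : A ∈ mulSidonSubsets K ↔ A ⊆ K ∧ MulSidon A := by
  rw [mulSidonSubsets, mem_filter, mem_powerset]

theorem MulSidon.mono {A B : Finset ℕ} (hB : MulSidon B) (hAB : A ⊆ B) : MulSidon A :=
  fun ⟨a₁, a₂, b₁, b₂, ha₁, ha₂, hb₁, hb₂, h⟩ ↦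
    hB ⟨a₁, a₂, b₁, b₂, hAB ha₁, hAB ha₂, hAB hb₁, hAB hb₂, h⟩

theorem card_mulSidonSubsets_le_prod {ι : Type*} [DecidableEq ι] {K : Finset ℕ} {J : Finset ι}
    {c : ℕ → ι} (hc : ∀ m ∈ K, c m ∈ J) :
    #(mulSidonSubsets K) ≤ ∏ j ∈ J, #(mulSidonSubsets {m ∈ K | c m = j}) := by
  rw [← card_pi]
  refine card_le_card_of_injOn (fun A j _ ↦ {m ∈ A | c m = j}) (fun A hA ↦ ?_) ?_
  · obtain ⟨hAK, hsidon⟩ := mem_mulSidonSubsets.mp hA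
    exact mem_pi.mpr fun j _ ↦ mem_mulSidonSubsets.mpr
      ⟨filter_subset_filter _ hAK, hsidon.mono (filter_subset _ _)⟩
  · have subset_of_eq {A B : Finset ℕ} (hA : A ∈ mulSidonSubsets K)
        (h : (fun j (_ : j ∈ J) ↦ {m ∈ A | c m = j}) = fun j _ ↦ {m ∈ B | c m = j}) : A ⊆ B := by
      intro m hm
      have hmA : m ∈ {k ∈ A | c k = c m} := mem_filter.mpr ⟨hm, rfl⟩
      have fiber_eq := congrFun (congrFun h (c m)) (hc m ((mem_mulSidonSubsets.mp hA).1 hm))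
      exact (mem_filter.mp (fiber_eq ▸ hmA)).1
    exact fun A hA B hB h ↦ (subset_of_eq hA h).antisymm (subset_of_eq hB h.symm)

theorem card_mulSidonSubsets_le_filter_mul_filter_not (K : Finset ℕ) (q : ℕ → Prop) :
    #(mulSidonSubsets K) ≤
      #(mulSidonSubsets {m ∈ K | q m}) * #(mulSidonSubsets {m ∈ K | ¬ q m}) := by
  refine (card_mulSidonSubsets_le_prod (J := {True, False}) (c := q) fun m _ ↦ ?_).trans_eq ?_
  · simp [em]
  · rw [prod_pair true_ne_false]
    simp only [eq_iff_iff, iff_true, iff_false]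

theorem MulSidon.isC4Free_image {A : Finset ℕ} {f g : ℕ → ℕ} (hA : MulSidon A)
    (hfg : ∀ m ∈ A, f m * g m = m) : IsC4Free (A.image fun m ↦ (f m, g m)) := by
  intro u u' v v' h₁ h₂ h₃ h₄
  obtain ⟨m₁, hm₁, e₁⟩ := mem_image.mp h₁
  obtain ⟨m₂, hm₂, e₂⟩ := mem_image.mp h₂
  obtain ⟨m₃, hm₃, e₃⟩ := mem_image.mp h₃
  obtain ⟨m₄, hm₄, e₄⟩ := mem_image.mp h₄
  rw [Prod.mk.injEq] at e₁ e₂ e₃ e₄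
  by_contra! hne
  refine hA ⟨m₁, m₄, m₂, m₃, hm₁, hm₄, hm₂, hm₃, ?_, ?_, ?_, ?_, ?_, ?_, ?_⟩
  · rintro rfl; exact hne.1 (e₁.1.symm.trans e₄.1)
  · rintro rfl; exact hne.2 (e₁.2.symm.trans e₂.2)
  · rintro rfl; exact hne.1 (e₁.1.symm.trans e₃.1)
  · rintro rfl; exact hne.1 (e₂.1.symm.trans e₄.1)
  · rintro rfl; exact hne.2 (e₃.2.symm.trans e₄.2)
  · rintro rfl; exact hne.1 (e₂.1.symm.trans e₃.1)
  · rw [← hfg m₁ hm₁, ← hfg m₂ hm₂, ← hfg m₃ hm₃, ← hfg m₄ hm₄, e₁.1, e₁.2, e₂.1, e₂.2, e₃.1,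
      e₃.2, e₄.1, e₄.2]
    ring

theorem card_mulSidonSubsets_le_card_c4FreeGraphs {K U V : Finset ℕ} {f g : ℕ → ℕ}
    (hfg : ∀ m ∈ K, f m * g m = m) (hf : ∀ m ∈ K, f m ∈ U) (hg : ∀ m ∈ K, g m ∈ V) :
    #(mulSidonSubsets K) ≤ #(c4FreeGraphs U V) := by
  have factors_injOn : Set.InjOn (fun m ↦ (f m, g m)) K := by
    intro m hm m' hm' h
    obtain ⟨hf', hg'⟩ := Prod.mk.inj h
    rw [← hfg m hm, ← hfg m' hm', hf', hg']
  refine card_le_card_of_injOn (·.image fun m ↦ (f m, g m)) (fun A hA ↦ ?_) fun A hA B hB ↦ ?_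
  · obtain ⟨hAK, hsidon⟩ := mem_mulSidonSubsets.mp hA
    refine mem_c4FreeGraphs.mpr ⟨?_, hsidon.isC4Free_image fun m hm ↦ hfg m (hAK hm)⟩
    exact image_subset_iff.mpr fun m hm ↦ mem_product.mpr ⟨hf m (hAK hm), hg m (hAK hm)⟩
  · exact image_injOn_powerset_of_injOn factors_injOn
      (mem_powerset.mpr (mem_mulSidonSubsets.mp hA).1)
      (mem_powerset.mpr (mem_mulSidonSubsets.mp hB).1)

section FiberMax

variable {P : ℕ → ℕ} {A B : Finset ℕ} {m p : ℕ}

/-- The largest `m ∈ A` with `P m = p`, or `0` if there is none. -/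
noncomputable def fiberMax (P : ℕ → ℕ) (A : Finset ℕ) (p : ℕ) : ℕ :=
  {m ∈ A | P m = p}.sup id

/-- The elements of `A` that are not the largest one in their fibre of `P`. -/
noncomputable def nonMaximal (P : ℕ → ℕ) (A : Finset ℕ) : Finset ℕ :=
  {m ∈ A | m ≠ fiberMax P A (P m)}

theorem nonMaximal_subset (P : ℕ → ℕ) (A : Finset ℕ) : nonMaximal P A ⊆ A :=
  filter_subset _ _

theorem fiberMax_mem (h : fiberMax P A p ≠ 0) :
    fiberMax P A p ∈ A ∧ P (fiberMax P A p) = p := by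
  have fiber_nonempty : {m ∈ A | P m = p}.Nonempty := by
    by_contra hempty
    simp [fiberMax, not_nonempty_iff_eq_empty.mp hempty] at h
  obtain ⟨x, hx, hsup⟩ := exists_mem_eq_sup _ fiber_nonempty id
  rw [fiberMax, hsup]
  exact mem_filter.mp hx

theorem fiberMax_ne_zero (hA : 0 ∉ A) (hm : m ∈ A) : fiberMax P A (P m) ≠ 0 := by
  have : m ≤ fiberMax P A (P m) := le_sup (f := id) (mem_filter.mpr ⟨hm, rfl⟩)
  have : m ≠ 0 := ne_of_mem_of_not_mem hm hA
  omega

theorem dvd_fiberMax (hP : ∀ m ∈ A, P m ∣ m) (p : ℕ) : p ∣ fiberMax P A p := by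
  by_cases h : fiberMax P A p = 0
  · exact h ▸ dvd_zero p
  · obtain ⟨hmem, hp⟩ := fiberMax_mem h
    simpa only [hp] using hP _ hmem

theorem subset_of_fiberMax_eq (hA : 0 ∉ A) (hrest : nonMaximal P A = nonMaximal P B)
    (hmax : ∀ m ∈ A, fiberMax P A (P m) = fiberMax P B (P m)) : A ⊆ B := by
  intro m hm
  by_cases h : m = fiberMax P A (P m)
  · have hne := fiberMax_ne_zero (P := P) hA hm
    rw [hmax m hm] at h hne
    exact h ▸ (fiberMax_mem hne).1
  · exact nonMaximal_subset P B (hrest ▸ mem_filter.mpr ⟨hm, h⟩)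

/-- If `m ≠ m'` had the same image, then `m * fiberMax (P m') = m' * fiberMax (P m)`. -/
theorem injOn_nonMaximal (hA : 0 ∉ A) (hP : ∀ m ∈ A, P m ∣ m) (hsidon : MulSidon A) :
    Set.InjOn (fun m ↦ (fiberMax P A (P m) / P m, m / P m)) (nonMaximal P A) := by
  intro m hm m' hm' heq
  obtain ⟨hmA, hmax⟩ := mem_filter.mp hm
  obtain ⟨hmA', hmax'⟩ := mem_filter.mp hm'
  obtain ⟨hM, hPM⟩ := fiberMax_mem (fiberMax_ne_zero (P := P) hA hmA)
  obtain ⟨hM', hPM'⟩ := fiberMax_mem (fiberMax_ne_zero (P := P) hA hmA')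
  obtain ⟨hquotM, hquot⟩ := Prod.mk.inj heq
  have hm_eq := Nat.mul_div_cancel' (hP m hmA)
  have hm_eq' := Nat.mul_div_cancel' (hP m' hmA')
  have hM_eq := Nat.mul_div_cancel' (dvd_fiberMax hP (P m))
  have hM_eq' := Nat.mul_div_cancel' (dvd_fiberMax hP (P m'))
  by_contra hne
  have hPne : P m ≠ P m' := fun h ↦ hne (by rw [← hm_eq, ← hm_eq', hquot, h])
  refine hsidon ⟨m, fiberMax P A (P m'), m', fiberMax P A (P m), hmA, hM', hmA', hM,
    fun h ↦ hPne ?_, hne, hmax, hmax'.symm, fun h ↦ hPne ?_, fun h ↦ hPne ?_, ?_⟩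
  · rw [← hPM', ← h]
  · rw [← hPM', h, hPM]
  · rw [h, hPM]
  · calc m * fiberMax P A (P m') = P m * (m / P m) * (P m' * (fiberMax P A (P m') / P m')) := by
          rw [hm_eq, hM_eq']
      _ = P m' * (m' / P m') * (P m * (fiberMax P A (P m) / P m)) := by rw [hquot, hquotM]; ring
      _ = m' * fiberMax P A (P m) := by rw [hm_eq', hM_eq]

theorem card_nonMaximal_le {Q : Finset ℕ} (hA : 0 ∉ A) (hP : ∀ m ∈ A, P m ∣ m)
    (hQ : ∀ m ∈ A, m / P m ∈ Q) (hsidon : MulSidon A) : #(nonMaximal P A) ≤ #Q ^ 2 := by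
  rw [sq, ← card_product]
  refine card_le_card_of_injOn _ (fun m hm ↦ mem_product.mpr ?_) (injOn_nonMaximal hA hP hsidon)
  have hmA := nonMaximal_subset P A hm
  obtain ⟨hM, hPM⟩ := fiberMax_mem (fiberMax_ne_zero (P := P) hA hmA)
  exact ⟨by simpa only [hPM] using hQ _ hM, hQ m hmA⟩

end FiberMax

theorem card_mulSidonSubsets_le_prod_mul {n : ℕ} {K J Q : Finset ℕ} {P : ℕ → ℕ}
    (hK : K ⊆ Icc 1 n) (hJ : ∀ m ∈ K, P m ∈ J) (hP : ∀ m ∈ K, P m ∣ m)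
    (hQ : ∀ m ∈ K, m / P m ∈ Q) :
    #(mulSidonSubsets K) ≤
      (∏ p ∈ J, (n / p + 1)) * #{I ∈ (Icc 1 n).powerset | #I ≤ #Q ^ 2} := by
  have zero_notMem {A : Finset ℕ} (hA : A ⊆ K) : 0 ∉ A := fun h ↦ by
    simpa using hK (hA h)
  have card_codomain : (∏ p ∈ J, (n / p + 1)) * #{I ∈ (Icc 1 n).powerset | #I ≤ #Q ^ 2} =
      #(J.pi (fun p ↦ range (n / p + 1)) ×ˢ {I ∈ (Icc 1 n).powerset | #I ≤ #Q ^ 2}) := by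
    simp only [card_product, card_pi, card_range]
  rw [card_codomain]
  refine card_le_card_of_injOn (fun A ↦ (fun p _ ↦ fiberMax P A p / p, nonMaximal P A))
    (fun A hA ↦ ?_) fun A hA B hB heq ↦ ?_
  · obtain ⟨hAK, hsidon⟩ := mem_mulSidonSubsets.mp hA
    refine mem_product.mpr ⟨mem_pi.mpr fun p _ ↦ ?_, mem_filter.mpr ⟨mem_powerset.mpr ?_, ?_⟩⟩
    · refine mem_range.mpr (Nat.lt_succ_of_le (Nat.div_le_div_right (Finset.sup_le fun m hm ↦ ?_)))
      exact (mem_Icc.mp (hK (hAK (mem_filter.mp hm).1))).2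
    · exact (nonMaximal_subset P A).trans (hAK.trans hK)
    · exact card_nonMaximal_le (zero_notMem hAK) (fun m hm ↦ hP m (hAK hm))
        (fun m hm ↦ hQ m (hAK hm)) hsidon
  · have hAK := (mem_mulSidonSubsets.mp hA).1
    have hBK := (mem_mulSidonSubsets.mp hB).1
    obtain ⟨hmax, hrest⟩ := Prod.mk.inj heq
    have fiberMax_eq (p : ℕ) (hp : p ∈ J) : fiberMax P A p = fiberMax P B p := by
      rw [← Nat.mul_div_cancel' (dvd_fiberMax (fun m hm ↦ hP m (hAK hm)) p),
        ← Nat.mul_div_cancel' (dvd_fiberMax (fun m hm ↦ hP m (hBK hm)) p)]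
      exact congrArg (p * ·) (congrFun (congrFun hmax p) hp)
    exact (subset_of_fiberMax_eq (zero_notMem hAK) hrest
      fun m hm ↦ fiberMax_eq _ (hJ m (hAK hm))).antisymm
      (subset_of_fiberMax_eq (zero_notMem hBK) hrest.symm
      fun m hm ↦ (fiberMax_eq _ (hJ m (hBK hm))).symm)

/-- The largest prime factor of `m`, with junk value `0` for `m ≤ 1`. -/
noncomputable def greatestPrimeFactor (m : ℕ) : ℕ :=
  m.primeFactors.sup id

theorem le_greatestPrimeFactor {m p : ℕ} (hp : p ∈ m.primeFactors) : p ≤ greatestPrimeFactor m :=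
  le_sup (f := id) hp

theorem greatestPrimeFactor_mem {m : ℕ} (h : greatestPrimeFactor m ≠ 0) :
    greatestPrimeFactor m ∈ m.primeFactors := by
  have primeFactors_nonempty : m.primeFactors.Nonempty := by
    by_contra hempty
    simp [greatestPrimeFactor, not_nonempty_iff_eq_empty.mp hempty] at h
  obtain ⟨p, hp, hsup⟩ := exists_mem_eq_sup _ primeFactors_nonempty id
  rwa [greatestPrimeFactor, hsup]

theorem rpow_two_thirds_lt_iff (n p : ℕ) : (n : ℝ) ^ ((2 : ℝ) / 3) < p ↔ n ^ 2 < p ^ 3 := by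
  have rpow_pow : ((n : ℝ) ^ ((2 : ℝ) / 3)) ^ 3 = (n : ℝ) ^ 2 := by
    rw [← rpow_natCast, ← rpow_mul (by positivity)]
    norm_num
  rw [← pow_lt_pow_iff_left₀ (by positivity) (by positivity) three_ne_zero, rpow_pow]
  norm_cast

theorem le_rpow_one_third {n c : ℕ} (h : c ^ 3 ≤ n) : (c : ℝ) ≤ (n : ℝ) ^ ((1 : ℝ) / 3) := by
  rw [one_div, le_rpow_inv_iff_of_pos (by positivity) (by positivity) three_pos]
  exact_mod_cast h

theorem cube_div_le_of_dvd {n m p : ℕ} (hmn : m ≤ n) (hp : p ∣ m) (hnp : n ^ 2 < p ^ 3) :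
    (m / p) ^ 3 ≤ n := by
  rcases n.eq_zero_or_pos with rfl | hn
  · simp [Nat.le_zero.mp hmn]
  have : n ^ 2 * (m / p) ^ 3 ≤ n ^ 2 * n :=
    calc n ^ 2 * (m / p) ^ 3 ≤ p ^ 3 * (m / p) ^ 3 := by gcongr
      _ = m ^ 3 := by rw [← mul_pow, Nat.mul_div_cancel' hp]
      _ ≤ n ^ 3 := by gcongr
      _ = n ^ 2 * n := by ring
  exact le_of_mul_le_mul_left this (by positivity)

theorem card_powerset_Icc_filter_card_le {n : ℕ} (hn : 0 < n) (d : ℕ) :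
    (#{I ∈ (Icc 1 n).powerset | #I ≤ d} : ℝ) ≤ exp (d * log n + 1) := by
  have hn0 : (0 : ℝ) < n := mod_cast hn
  calc (#{I ∈ (Icc 1 n).powerset | #I ≤ d} : ℝ) ≤ (n : ℝ)⁻¹⁻¹ ^ d * exp ((n : ℝ)⁻¹ * n) :=
        card_powerset_filter_card_le _ d (by positivity)
          (inv_le_one_of_one_le₀ (mod_cast hn)) (by simp)
    _ = exp (d * log n + 1) := by
        rw [inv_inv, inv_mul_cancel₀ hn0.ne', exp_add, exp_nat_mul, exp_log hn0]

theorem greatestPrimeFactor_mem_of_lt_pow {a k m : ℕ} (hk : k ≠ 0)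
    (h : a < greatestPrimeFactor m ^ k) : greatestPrimeFactor m ∈ m.primeFactors :=
  greatestPrimeFactor_mem fun h0 ↦ by simp [h0, hk] at h

theorem card_mulSidonSubsets_large_le_mul (n : ℕ) :
    #(mulSidonSubsets {m ∈ Icc 1 n | n ^ 2 < greatestPrimeFactor m ^ 3}) ≤
      T n * #{I ∈ (Icc 1 n).powerset | #I ≤ #(Icc 1 ⌊(n : ℝ) ^ ((1 : ℝ) / 3)⌋₊) ^ 2} := by
  refine card_mulSidonSubsets_le_prod_mul (P := greatestPrimeFactor) (filter_subset _ _)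
    (fun m hm ↦ ?_) (fun m hm ↦ ?_) fun m hm ↦ ?_ <;>
    obtain ⟨hmn, hlarge⟩ := mem_filter.mp hm <;>
    have hgpf := greatestPrimeFactor_mem_of_lt_pow three_ne_zero hlarge <;>
    have gpf_le := Nat.le_of_mem_primeFactors hgpf <;>
    have gpf_prime := Nat.prime_of_mem_primeFactors hgpf <;>
    have gpf_dvd := Nat.dvd_of_mem_primeFactors hgpf
  · exact mem_filter.mpr ⟨mem_Icc.mpr ⟨gpf_prime.one_le, gpf_le.trans (mem_Icc.mp hmn).2⟩,
      gpf_prime, (rpow_two_thirds_lt_iff _ _).mpr hlarge⟩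
  · exact gpf_dvd
  · refine mem_Icc.mpr ⟨Nat.div_pos gpf_le gpf_prime.pos, Nat.le_floor ?_⟩
    exact le_rpow_one_third (cube_div_le_of_dvd (mem_Icc.mp hmn).2 gpf_dvd hlarge)

theorem card_mulSidonSubsets_large_le {n : ℕ} (hn : 0 < n) :
    (#(mulSidonSubsets {m ∈ Icc 1 n | n ^ 2 < greatestPrimeFactor m ^ 3}) : ℝ) ≤
      T n * exp ((n : ℝ) ^ ((2 : ℝ) / 3) * log n + 1) := by
  set Q := Icc 1 ⌊(n : ℝ) ^ ((1 : ℝ) / 3)⌋₊ with hQ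
  have card_Q_le : (#Q : ℝ) ^ 2 ≤ (n : ℝ) ^ ((2 : ℝ) / 3) :=
    calc (#Q : ℝ) ^ 2 ≤ ((n : ℝ) ^ ((1 : ℝ) / 3)) ^ 2 := by
          gcongr
          simpa [hQ] using Nat.floor_le (by positivity)
      _ = (n : ℝ) ^ ((2 : ℝ) / 3) := by
          rw [← rpow_natCast, ← rpow_mul (by positivity)]
          norm_num
  calc (#(mulSidonSubsets {m ∈ Icc 1 n | n ^ 2 < greatestPrimeFactor m ^ 3}) : ℝ)
      ≤ T n * #{I ∈ (Icc 1 n).powerset | #I ≤ #Q ^ 2} :=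
        mod_cast card_mulSidonSubsets_large_le_mul n
    _ ≤ T n * exp ((#Q ^ 2 : ℕ) * log n + 1) := by
        gcongr
        exact card_powerset_Icc_filter_card_le hn _
    _ ≤ T n * exp ((n : ℝ) ^ ((2 : ℝ) / 3) * log n + 1) := by
        push_cast
        gcongr

end MulSidonSubsets

section BalancedFactorization

/-! ### Balanced factorizations -/

/-- The largest divisor `u` of `m` with `u ≤ n^(2/3)`. -/
def leftFactor (n m : ℕ) : ℕ :=
  {d ∈ m.divisors | d ^ 3 ≤ n ^ 2}.sup id

/-- The cofactor of `leftFactor n m`. -/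
def rightFactor (n m : ℕ) : ℕ :=
  m / leftFactor n m

variable {n m q : ℕ}

theorem le_leftFactor (hm : 0 < m) {d : ℕ} (hd : d ∣ m) (h : d ^ 3 ≤ n ^ 2) :
    d ≤ leftFactor n m :=
  le_sup (f := id) (mem_filter.mpr ⟨Nat.mem_divisors.mpr ⟨hd, hm.ne'⟩, h⟩)

theorem leftFactor_mem (hm : 0 < m) (hn : 0 < n) :
    leftFactor n m ∈ {d ∈ m.divisors | d ^ 3 ≤ n ^ 2} := by
  have one_mem : 1 ∈ {d ∈ m.divisors | d ^ 3 ≤ n ^ 2} :=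
    mem_filter.mpr ⟨Nat.one_mem_divisors.mpr hm.ne', by rw [one_pow]; exact Nat.one_le_pow _ _ hn⟩
  obtain ⟨d, hd, hsup⟩ := exists_mem_eq_sup _ ⟨1, one_mem⟩ id
  rwa [leftFactor, hsup]

theorem leftFactor_pow_le (hm : 0 < m) (hn : 0 < n) : leftFactor n m ^ 3 ≤ n ^ 2 :=
  (mem_filter.mp (leftFactor_mem hm hn)).2

theorem leftFactor_mul_rightFactor (hm : 0 < m) (hn : 0 < n) :
    leftFactor n m * rightFactor n m = m :=
  Nat.mul_div_cancel' (Nat.dvd_of_mem_divisors (mem_filter.mp (leftFactor_mem hm hn)).1)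

theorem leftFactor_pos (hm : 0 < m) (hn : 0 < n) : 0 < leftFactor n m :=
  Nat.pos_of_mul_pos_right ((leftFactor_mul_rightFactor hm hn).symm ▸ hm)

theorem rightFactor_pos (hm : 0 < m) (hn : 0 < n) : 0 < rightFactor n m :=
  Nat.pos_of_mul_pos_left ((leftFactor_mul_rightFactor hm hn).symm ▸ hm)

theorem rightFactor_dvd (hm : 0 < m) (hn : 0 < n) : rightFactor n m ∣ m :=
  Dvd.intro_left _ (leftFactor_mul_rightFactor hm hn)

theorem sq_lt_leftFactor_mul_pow (hm : 0 < m) (hn : 0 < n) (hq : 1 < q)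
    (hqv : q ∣ rightFactor n m) : n ^ 2 < (leftFactor n m * q) ^ 3 := by
  by_contra! hle
  have mul_dvd : leftFactor n m * q ∣ m :=
    (Nat.mul_dvd_mul_left _ hqv).trans (leftFactor_mul_rightFactor hm hn).dvd
  exact (le_leftFactor hm mul_dvd hle).not_gt (lt_mul_of_one_lt_right (leftFactor_pos hm hn) hq)

theorem rightFactor_mul_le_or_sq_lt (hm : 0 < m) (hn : 0 < n) (hqu : q ∣ leftFactor n m) :
    rightFactor n m * q ≤ leftFactor n m ∨ n ^ 2 < (rightFactor n m * q) ^ 3 := by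
  refine (le_or_gt ((rightFactor n m * q) ^ 3) (n ^ 2)).imp_left (le_leftFactor hm ?_)
  rw [mul_comm]
  exact (Nat.mul_dvd_mul_right hqu _).trans (leftFactor_mul_rightFactor hm hn).dvd

/-- If `u < v`, then `v > n^(2/3)` by maximality of `u`, so `u < n^(1/3)`; but `u` is at least any
prime factor `q` of `v`, and `u * q > n^(2/3)`. -/
theorem rightFactor_le_leftFactor (hm : 0 < m) (hmn : m ≤ n)
    (hsmooth : ∀ p, p.Prime → p ∣ m → p ^ 3 ≤ n ^ 2) : rightFactor n m ≤ leftFactor n m := by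
  have hn : 0 < n := hm.trans_le hmn
  have hu := leftFactor_pos hm hn
  by_contra! huv
  have sq_lt_right : n ^ 2 < rightFactor n m ^ 3 := by
    by_contra! h
    exact huv.not_ge (le_leftFactor hm (rightFactor_dvd hm hn) h)
  have left_lt : leftFactor n m ^ 3 < n := by
    refine lt_of_mul_lt_mul_right (a := n ^ 2) ?_ (by positivity)
    calc leftFactor n m ^ 3 * n ^ 2 < leftFactor n m ^ 3 * rightFactor n m ^ 3 := by gcongr
      _ = m ^ 3 := by rw [← mul_pow, leftFactor_mul_rightFactor hm hn]
      _ ≤ n ^ 3 := by gcongr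
      _ = n * n ^ 2 := by ring
  obtain ⟨q, hq, hqv⟩ := Nat.exists_prime_and_dvd (Nat.ne_of_gt (lt_of_le_of_lt hu huv))
  have hqm : q ∣ m := hqv.trans (rightFactor_dvd hm hn)
  have hqu : q ≤ leftFactor n m := le_leftFactor hm hqm (hsmooth q hq hqm)
  have : n ^ 2 < n ^ 2 :=
    calc n ^ 2 < (leftFactor n m * q) ^ 3 := sq_lt_leftFactor_mul_pow hm hn hq.one_lt hqv
      _ ≤ (leftFactor n m * leftFactor n m) ^ 3 := by gcongr
      _ = (leftFactor n m ^ 3) ^ 2 := by ring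
      _ ≤ n ^ 2 := by gcongr
  exact this.false

/-- The `m ≤ n` all of whose prime factors are at most `n^(2/3)`. -/
noncomputable def smoothNumbers (n : ℕ) : Finset ℕ :=
  {m ∈ Icc 1 n | ¬ n ^ 2 < greatestPrimeFactor m ^ 3}

theorem pos_and_le_of_mem_smoothNumbers (h : m ∈ smoothNumbers n) : 0 < m ∧ m ≤ n :=
  mem_Icc.mp (mem_filter.mp h).1

theorem pos_of_mem_smoothNumbers (h : m ∈ smoothNumbers n) : 0 < m ∧ 0 < n :=
  have ⟨hm, hmn⟩ := pos_and_le_of_mem_smoothNumbers h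
  ⟨hm, hm.trans_le hmn⟩

theorem rightFactor_le_leftFactor_of_mem (h : m ∈ smoothNumbers n) :
    rightFactor n m ≤ leftFactor n m := by
  obtain ⟨hm, hmn⟩ := pos_and_le_of_mem_smoothNumbers h
  refine rightFactor_le_leftFactor hm hmn fun p hp hpm ↦ ?_
  calc p ^ 3 ≤ greatestPrimeFactor m ^ 3 := by
        gcongr
        exact le_greatestPrimeFactor (Nat.mem_primeFactors.mpr ⟨hp, hpm, hm.ne'⟩)
    _ ≤ n ^ 2 := not_lt.mp (mem_filter.mp h).2

theorem leftFactor_mul_rightFactor_le (h : m ∈ smoothNumbers n) :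
    leftFactor n m * rightFactor n m ≤ n := by
  obtain ⟨hm, hn⟩ := pos_of_mem_smoothNumbers h
  rw [leftFactor_mul_rightFactor hm hn]
  exact (pos_and_le_of_mem_smoothNumbers h).2

theorem rightFactor_sq_le (h : m ∈ smoothNumbers n) : rightFactor n m ^ 2 ≤ n := by
  rw [sq]
  exact (Nat.mul_le_mul_right _ (rightFactor_le_leftFactor_of_mem h)).trans
    (leftFactor_mul_rightFactor_le h)

/-- The dyadic scale of `m = u * v`: the `j` with `v ≈ √n / 2^j`, capped at `⌊log₂ n / 10⌋`. -/
def scale (n m : ℕ) : ℕ :=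
  min (Nat.log 1024 n) (Nat.log 4 (n / rightFactor n m ^ 2))

theorem scale_le (n m : ℕ) : scale n m ≤ Nat.log 1024 n :=
  min_le_left _ _

theorem four_pow_scale_mul_le (h : m ∈ smoothNumbers n) :
    4 ^ scale n m * rightFactor n m ^ 2 ≤ n := by
  obtain ⟨hm, hn⟩ := pos_of_mem_smoothNumbers h
  have hv : 0 < rightFactor n m ^ 2 := pow_pos (rightFactor_pos hm hn) 2
  rw [← Nat.le_div_iff_mul_le hv]
  exact (Nat.pow_le_pow_right (by norm_num) (min_le_right _ _)).trans
    (Nat.pow_log_le_self 4 (Nat.div_pos (rightFactor_sq_le h) hv).ne')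

theorem rightFactor_le_sqrt (h : m ∈ smoothNumbers n) :
    rightFactor n m ≤ Nat.sqrt (n / 4 ^ scale n m) := by
  rw [Nat.le_sqrt', Nat.le_div_iff_mul_le (by positivity), mul_comm]
  exact four_pow_scale_mul_le h

theorem lt_four_pow_scale_succ_mul (h : m ∈ smoothNumbers n) (hj : scale n m < Nat.log 1024 n) :
    n < 4 ^ (scale n m + 1) * rightFactor n m ^ 2 := by
  obtain ⟨hm, hn⟩ := pos_of_mem_smoothNumbers h
  have scale_eq : scale n m = Nat.log 4 (n / rightFactor n m ^ 2) := by
    unfold scale at hj ⊢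
    omega
  rw [← Nat.div_lt_iff_lt_mul (pow_pos (rightFactor_pos hm hn) 2), scale_eq]
  exact Nat.lt_pow_succ_log_self (by norm_num) _

theorem leftFactor_sq_le (h : m ∈ smoothNumbers n) (hj : scale n m < Nat.log 1024 n) :
    leftFactor n m ^ 2 ≤ 4 ^ (scale n m + 1) * n := by
  obtain ⟨hm, hn⟩ := pos_of_mem_smoothNumbers h
  refine le_of_mul_le_mul_right ?_ (pow_pos (rightFactor_pos hm hn) 2)
  calc leftFactor n m ^ 2 * rightFactor n m ^ 2 = (leftFactor n m * rightFactor n m) ^ 2 := by ring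
    _ ≤ n ^ 2 := by gcongr; exact leftFactor_mul_rightFactor_le h
    _ ≤ 4 ^ (scale n m + 1) * rightFactor n m ^ 2 * n := by
        rw [sq]
        gcongr
        exact (lt_four_pow_scale_succ_mul h hj).le
    _ = 4 ^ (scale n m + 1) * n * rightFactor n m ^ 2 := by ring

theorem prime_lt_or_lt_pow_of_dvd_leftFactor (h : m ∈ smoothNumbers n)
    (hj : scale n m < Nat.log 1024 n) (hqu : q ∣ leftFactor n m) :
    q < 4 ^ (scale n m + 1) ∨ n < q ^ 6 := by
  obtain ⟨hm, hn⟩ := pos_of_mem_smoothNumbers h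
  refine (rightFactor_mul_le_or_sq_lt hm hn hqu).imp (fun hle ↦ ?_) fun hlt ↦ ?_
  · refine lt_of_mul_lt_mul_right (a := rightFactor n m ^ 2) ?_ (by positivity)
    calc q * rightFactor n m ^ 2 = rightFactor n m * q * rightFactor n m := by ring
      _ ≤ leftFactor n m * rightFactor n m := by gcongr
      _ ≤ n := leftFactor_mul_rightFactor_le h
      _ < 4 ^ (scale n m + 1) * rightFactor n m ^ 2 := lt_four_pow_scale_succ_mul h hj
  · refine lt_of_mul_lt_mul_left (a := n ^ 3) ?_ (by positivity)
    calc n ^ 3 * n = (n ^ 2) ^ 2 := by ring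
      _ < ((rightFactor n m * q) ^ 3) ^ 2 := by gcongr
      _ = (rightFactor n m ^ 2) ^ 3 * q ^ 6 := by ring
      _ ≤ n ^ 3 * q ^ 6 := by gcongr; exact rightFactor_sq_le h

theorem four_pow_pow_five_le {j : ℕ} (hj : j < Nat.log 1024 n) : (4 ^ (j + 1)) ^ 5 ≤ n := by
  have hn : n ≠ 0 := by rintro rfl; simp at hj
  rw [pow_right_comm]
  exact Nat.pow_le_of_le_log hn hj

theorem lt_pow_of_dvd_rightFactor (h : m ∈ smoothNumbers n)
    (hj : scale n m < Nat.log 1024 n) (hq : 1 < q) (hqv : q ∣ rightFactor n m) :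
    n < q ^ 15 := by
  obtain ⟨hm, hn⟩ := pos_of_mem_smoothNumbers h
  refine lt_of_pow_lt_pow_left₀ 2 (by positivity) ?_
  refine lt_of_mul_lt_mul_left (a := n ^ 18) ?_ (by positivity)
  calc n ^ 18 * n ^ 2 = (n ^ 2) ^ 10 := by ring
    _ < ((leftFactor n m * q) ^ 3) ^ 10 := by
        gcongr
        exact sq_lt_leftFactor_mul_pow hm hn hq hqv
    _ = (leftFactor n m ^ 2) ^ 15 * (q ^ 15) ^ 2 := by ring
    _ ≤ (4 ^ (scale n m + 1) * n) ^ 15 * (q ^ 15) ^ 2 := by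
        gcongr
        exact leftFactor_sq_le h hj
    _ = ((4 ^ (scale n m + 1)) ^ 5) ^ 3 * n ^ 15 * (q ^ 15) ^ 2 := by ring
    _ ≤ n ^ 3 * n ^ 15 * (q ^ 15) ^ 2 := by
        gcongr
        exact four_pow_pow_five_le hj
    _ = n ^ 18 * (q ^ 15) ^ 2 := by ring

theorem leftFactor_mem_gapNumbers (h : m ∈ smoothNumbers n) (hj : scale n m < Nat.log 1024 n) :
    leftFactor n m ∈
      gapNumbers n 16 (Nat.sqrt (4 ^ (scale n m + 1) * n)) (2 * (scale n m + 1)) := by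
  obtain ⟨hm, hn⟩ := pos_of_mem_smoothNumbers h
  refine mem_gapNumbers.mpr
    ⟨⟨leftFactor_pos hm hn, Nat.le_sqrt'.mpr (leftFactor_sq_le h hj)⟩, fun q hq hqu ↦ ?_⟩
  rw [pow_mul]
  exact (prime_lt_or_lt_pow_of_dvd_leftFactor h hj hqu).imp_right
    fun hlt ↦ hlt.trans_le (Nat.pow_le_pow_right hq.pos (by norm_num))

theorem rightFactor_mem_gapNumbers (h : m ∈ smoothNumbers n) (hj : scale n m < Nat.log 1024 n) :
    rightFactor n m ∈ gapNumbers n 16 (Nat.sqrt (n / 4 ^ scale n m)) 0 := by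
  obtain ⟨hm, hn⟩ := pos_of_mem_smoothNumbers h
  refine mem_gapNumbers.mpr ⟨⟨rightFactor_pos hm hn, rightFactor_le_sqrt h⟩, fun q hq hqv ↦ .inr ?_⟩
  exact (lt_pow_of_dvd_rightFactor h hj hq.one_lt hqv).trans_le
    (Nat.pow_le_pow_right hq.pos (by norm_num))

theorem leftFactor_mul_rightFactor_of_mem {j : ℕ}
    (h : m ∈ {m ∈ smoothNumbers n | scale n m = j}) : leftFactor n m * rightFactor n m = m :=
  have ⟨hm, hn⟩ := pos_of_mem_smoothNumbers (mem_filter.mp h).1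
  leftFactor_mul_rightFactor hm hn

theorem card_mulSidonSubsets_scale_le {j : ℕ} (hj : j < Nat.log 1024 n) :
    #(mulSidonSubsets {m ∈ smoothNumbers n | scale n m = j}) ≤
      #(c4FreeGraphs (gapNumbers n 16 (Nat.sqrt (4 ^ (j + 1) * n)) (2 * (j + 1)))
        (gapNumbers n 16 (Nat.sqrt (n / 4 ^ j)) 0)) := by
  refine card_mulSidonSubsets_le_card_c4FreeGraphs
    (fun m hmj ↦ leftFactor_mul_rightFactor_of_mem hmj) (fun m hmj ↦ ?_) fun m hmj ↦ ?_ <;>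
    obtain ⟨hm, rfl⟩ := mem_filter.mp hmj
  · exact leftFactor_mem_gapNumbers hm hj
  · exact rightFactor_mem_gapNumbers hm hj

theorem card_mulSidonSubsets_scale_le_Icc (n j : ℕ) :
    #(mulSidonSubsets {m ∈ smoothNumbers n | scale n m = j}) ≤
      #(c4FreeGraphs {u ∈ Icc 1 n | u ^ 3 ≤ n ^ 2} (Icc 1 (Nat.sqrt (n / 4 ^ j)))) := by
  refine card_mulSidonSubsets_le_card_c4FreeGraphs
    (fun m hmj ↦ leftFactor_mul_rightFactor_of_mem hmj) (fun m hmj ↦ ?_) fun m hmj ↦ ?_ <;>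
    obtain ⟨hm, rfl⟩ := mem_filter.mp hmj <;>
    obtain ⟨hm0, hn⟩ := pos_of_mem_smoothNumbers hm
  · have left_le : leftFactor n m ≤ n :=
      (Nat.le_mul_of_pos_right _ (rightFactor_pos hm0 hn)).trans (leftFactor_mul_rightFactor_le hm)
    exact mem_filter.mpr
      ⟨mem_Icc.mpr ⟨leftFactor_pos hm0 hn, left_le⟩, leftFactor_pow_le hm0 hn⟩
  · exact mem_Icc.mpr ⟨rightFactor_pos hm0 hn, rightFactor_le_sqrt hm⟩

theorem card_mulSidonSubsets_smoothNumbers_le (n : ℕ) :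
    #(mulSidonSubsets (smoothNumbers n)) ≤ ∏ j ∈ range (Nat.log 1024 n + 1),
      #(mulSidonSubsets {m ∈ smoothNumbers n | scale n m = j}) :=
  card_mulSidonSubsets_le_prod (c := scale n) fun m _ ↦
    mem_range.mpr (Nat.lt_succ_of_le (scale_le n m))

end BalancedFactorization

section ClassSizes

/-! ### Sizes of the classes of factors -/

variable {n j : ℕ}

theorem card_gapNumbers_le_div_log {X : ℕ} (e k : ℕ) (hn : 1 < n) (hX : X ≤ n) (hnX : n ≤ X ^ 4) :
    (#(gapNumbers n e X k) : ℝ) ≤ 28 * exp (8 + 16 * e) * X * (k + 1) ^ 8 / log n := by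
  have hn' : (1 : ℝ) < n := mod_cast hn
  have log_n_le : log n ≤ 4 * log X := by
    rw [← Nat.cast_ofNat, ← log_pow]
    exact log_le_log (by positivity) (mod_cast hnX)
  rw [le_div_iff₀ (log_pos hn')]
  calc #(gapNumbers n e X k) * log n ≤ #(gapNumbers n e X k) * (4 * log X) := by gcongr
    _ = 4 * (#(gapNumbers n e X k) * log X) := by ring
    _ ≤ 4 * (7 * exp (8 + 16 * e) * X * (k + 1) ^ 8) := by
        gcongr 4 * ?_
        exact card_gapNumbers_mul_log_le e k hX
    _ = 28 * exp (8 + 16 * e) * X * (k + 1) ^ 8 := by ring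

theorem lt_four_mul_sqrt_sq {N : ℕ} (hN : 0 < N) : N < 4 * Nat.sqrt N ^ 2 :=
  calc N < (Nat.sqrt N + 1) ^ 2 := Nat.lt_succ_sqrt' N
    _ ≤ (2 * Nat.sqrt N) ^ 2 := by
        have := Nat.sqrt_pos.mpr hN
        gcongr
        omega
    _ = 4 * Nat.sqrt N ^ 2 := by ring

theorem one_lt_of_lt_log (hj : j < Nat.log 1024 n) : 1 < n :=
  (Nat.one_lt_pow (by norm_num) (Nat.one_lt_pow j.succ_ne_zero (by norm_num))).trans_le
    (four_pow_pow_five_le hj)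

theorem sqrt_four_pow_mul_le (hj : j < Nat.log 1024 n) : Nat.sqrt (4 ^ (j + 1) * n) ≤ n := by
  have four_pow_le : 4 ^ (j + 1) ≤ n :=
    (Nat.le_self_pow (by norm_num) _).trans (four_pow_pow_five_le hj)
  calc Nat.sqrt (4 ^ (j + 1) * n) ≤ Nat.sqrt (n * n) := Nat.sqrt_le_sqrt (by gcongr)
    _ = n := Nat.sqrt_eq n

theorem le_sqrt_four_pow_mul_pow (hn : 0 < n) (j : ℕ) : n ≤ Nat.sqrt (4 ^ (j + 1) * n) ^ 4 := by
  set X := Nat.sqrt (4 ^ (j + 1) * n)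
  have lt_sq : 4 * n < 4 * X ^ 2 :=
    calc 4 * n ≤ 4 ^ (j + 1) * n := by gcongr; exact Nat.le_self_pow j.succ_ne_zero 4
      _ < 4 * X ^ 2 := lt_four_mul_sqrt_sq (by positivity)
  calc n ≤ X ^ 2 := by omega
    _ ≤ (X ^ 2) ^ 2 := Nat.le_self_pow two_ne_zero _
    _ = X ^ 4 := by ring

theorem le_sqrt_div_four_pow_pow (hj : j < Nat.log 1024 n) : n ≤ Nat.sqrt (n / 4 ^ j) ^ 4 := by
  set X := Nat.sqrt (n / 4 ^ j) with hX
  have hn : 0 < n := zero_lt_one.trans (one_lt_of_lt_log hj)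
  have four_pow_le : 4 ^ j ≤ n :=
    calc 4 ^ j ≤ 4 ^ (j + 1) := Nat.pow_le_pow_right (by norm_num) j.le_succ
      _ ≤ (4 ^ (j + 1)) ^ 5 := Nat.le_self_pow (by norm_num) _
      _ ≤ n := four_pow_pow_five_le hj
  have quot_pos : 0 < n / 4 ^ j := Nat.div_pos four_pow_le (by positivity)
  have hX0 : 0 < X := Nat.sqrt_pos.mpr quot_pos
  have n_lt : n < 4 ^ (j + 1) * X ^ 2 := by
    have := (Nat.div_lt_iff_lt_mul (by positivity)).mp (lt_four_mul_sqrt_sq quot_pos)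
    rw [← hX] at this
    calc n < 4 * X ^ 2 * 4 ^ j := this
      _ = 4 ^ (j + 1) * X ^ 2 := by ring
  have : n * n ^ 4 ≤ n * (X ^ 4) ^ 4 :=
    calc n * n ^ 4 = n ^ 5 := by ring
      _ ≤ (4 ^ (j + 1) * X ^ 2) ^ 5 := by gcongr
      _ = (4 ^ (j + 1)) ^ 5 * X ^ 10 := by ring
      _ ≤ n * X ^ 16 := Nat.mul_le_mul (four_pow_pow_five_le hj)
          (Nat.pow_le_pow_right hX0 (by norm_num))
      _ = n * (X ^ 4) ^ 4 := by ring
  exact le_of_pow_le_pow_left₀ (by norm_num) (by positivity) (le_of_mul_le_mul_left this hn)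

theorem four_pow_eq_sq (j : ℕ) : (4 : ℝ) ^ j = (2 ^ j) ^ 2 := by
  rw [pow_right_comm]
  norm_num

theorem cast_sqrt_four_pow_mul_le (n j : ℕ) :
    (Nat.sqrt (4 ^ (j + 1) * n) : ℝ) ≤ 2 * (√n * 2 ^ j) :=
  calc (Nat.sqrt (4 ^ (j + 1) * n) : ℝ) ≤ √(4 ^ (j + 1) * n : ℕ) := nat_sqrt_le_real_sqrt
    _ = √((2 ^ (j + 1)) ^ 2 * n) := by push_cast; rw [four_pow_eq_sq]
    _ = 2 ^ (j + 1) * √n := by rw [sqrt_mul (by positivity), sqrt_sq (by positivity)]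
    _ = 2 * (√n * 2 ^ j) := by ring

theorem cast_sqrt_div_four_pow_le (n j : ℕ) : (Nat.sqrt (n / 4 ^ j) : ℝ) ≤ √n / 2 ^ j :=
  calc (Nat.sqrt (n / 4 ^ j) : ℝ) ≤ √(n / 4 ^ j : ℕ) := nat_sqrt_le_real_sqrt
    _ ≤ √(n / (2 ^ j) ^ 2) := by
        rw [← four_pow_eq_sq]
        exact sqrt_le_sqrt (mod_cast Nat.cast_div_le)
    _ = √n / 2 ^ j := by rw [sqrt_div' _ (by positivity), sqrt_sq (by positivity)]

/-- The constant that the sieve bound `card_gapNumbers_mul_log_le` yields for `e = 16`. -/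
noncomputable def sieveConst : ℝ :=
  56 * exp 264 * 3 ^ 8

theorem one_le_sieveConst : 1 ≤ sieveConst := by
  have : 1 ≤ exp 264 := one_le_exp (by norm_num)
  unfold sieveConst
  linarith

theorem sieveConst_pos : 0 < sieveConst :=
  zero_lt_one.trans_le one_le_sieveConst

/-- A bound for the number of left factors at scale `j`. -/
noncomputable def leftBound (n j : ℕ) : ℝ :=
  sieveConst * (√n * 2 ^ j * (j + 1) ^ 8) / log n

/-- A bound for the number of right factors at scale `j`. -/
noncomputable def rightBound (n j : ℕ) : ℝ :=
  sieveConst * (√n / 2 ^ j) / log n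

theorem leftBound_pos (hn : 1 < n) (j : ℕ) : 0 < leftBound n j := by
  have := log_pos (Nat.one_lt_cast.mpr hn)
  have := sieveConst_pos
  unfold leftBound
  positivity

theorem rightBound_pos (hn : 1 < n) (j : ℕ) : 0 < rightBound n j := by
  have := log_pos (Nat.one_lt_cast.mpr hn)
  have := sieveConst_pos
  unfold rightBound
  positivity

theorem card_gapNumbers_le_leftBound (hj : j < Nat.log 1024 n) :
    (#(gapNumbers n 16 (Nat.sqrt (4 ^ (j + 1) * n)) (2 * (j + 1))) : ℝ) ≤ leftBound n j := by
  have hn := one_lt_of_lt_log hj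
  have two_mul_succ_add_one_le : ((2 * (j + 1) : ℕ) : ℝ) + 1 ≤ 3 * (j + 1) := by
    push_cast
    linarith [j.cast_nonneg (α := ℝ)]
  refine (card_gapNumbers_le_div_log 16 _ hn (sqrt_four_pow_mul_le hj)
    (le_sqrt_four_pow_mul_pow (zero_lt_one.trans hn) j)).trans ?_
  calc 28 * exp (8 + 16 * (16 : ℕ)) * (Nat.sqrt (4 ^ (j + 1) * n) : ℝ) *
        ((2 * (j + 1) : ℕ) + 1) ^ 8 / log n
      ≤ 28 * exp (8 + 16 * (16 : ℕ)) * (2 * (√n * 2 ^ j)) * (3 * (j + 1)) ^ 8 / log n := by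
        gcongr
        exact cast_sqrt_four_pow_mul_le n j
    _ = leftBound n j := by
        rw [leftBound, sieveConst]
        norm_num
        ring

theorem card_gapNumbers_le_rightBound (hj : j < Nat.log 1024 n) :
    (#(gapNumbers n 16 (Nat.sqrt (n / 4 ^ j)) 0) : ℝ) ≤ rightBound n j := by
  refine (card_gapNumbers_le_div_log 16 0 (one_lt_of_lt_log hj)
    ((Nat.sqrt_le_self _).trans (Nat.div_le_self _ _)) (le_sqrt_div_four_pow_pow hj)).trans ?_
  calc 28 * exp (8 + 16 * (16 : ℕ)) * (Nat.sqrt (n / 4 ^ j) : ℝ) * ((0 : ℕ) + 1) ^ 8 / log n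
      ≤ 28 * exp (8 + 16 * (16 : ℕ)) * (√n / 2 ^ j) * (2 * 3 ^ 8) / log n := by
        gcongr
        · exact cast_sqrt_div_four_pow_le n j
        · norm_num
    _ = rightBound n j := by
        rw [rightBound, sieveConst]
        norm_num
        ring

theorem leftBound_div_rightBound (hn : 1 < n) (j : ℕ) :
    leftBound n j / rightBound n j = (2 ^ j) ^ 2 * (j + 1) ^ 8 := by
  have := log_pos (Nat.one_lt_cast.mpr hn)
  have := sieveConst_pos
  rw [leftBound, rightBound]
  field_simp

theorem rightBound_le_leftBound (hn : 1 < n) (j : ℕ) : rightBound n j ≤ leftBound n j := by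
  rw [← one_le_div (rightBound_pos hn j), leftBound_div_rightBound hn]
  exact one_le_mul_of_one_le_of_one_le (one_le_pow₀ (one_le_pow₀ one_le_two))
    (one_le_pow₀ (by linarith [j.cast_nonneg (α := ℝ)]))

theorem log_leftBound_div_rightBound_le (hn : 1 < n) (j : ℕ) :
    log (leftBound n j / rightBound n j) ≤ 10 * j := by
  have log_succ_le : log ((j : ℝ) + 1) ≤ j := by
    linarith [log_le_sub_one_of_pos (by positivity : (0 : ℝ) < j + 1)]
  calc log (leftBound n j / rightBound n j) = 2 * (j * log 2) + 8 * log (j + 1) := by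
        rw [leftBound_div_rightBound hn, log_mul (by positivity) (by positivity), log_pow, log_pow,
          log_pow]
        norm_num
    _ ≤ 2 * (j * 1) + 8 * j := by
        gcongr
        linarith [log_two_lt_d9]
    _ = 10 * j := by ring

/-- The exponent `n^(3/4) / (log n)^(3/2)` of the main error term. -/
noncomputable def mainTerm (n : ℕ) : ℝ :=
  (n : ℝ) ^ ((3 : ℝ) / 4) / log n ^ ((3 : ℝ) / 2)

theorem rpow_three_halves {x : ℝ} (hx : 0 ≤ x) : x ^ ((3 : ℝ) / 2) = x * √x := by
  rw [sqrt_eq_rpow, ← rpow_one_add' hx (by norm_num)]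
  norm_num

theorem sqrt_leftBound (hn : 1 < n) (j : ℕ) :
    √(leftBound n j) = √sieveConst * √√n * √2 ^ j * (j + 1) ^ 4 / √(log n) := by
  have := log_pos (Nat.one_lt_cast.mpr hn)
  have pow_eight : ((j : ℝ) + 1) ^ 8 = ((j + 1) ^ 4) ^ 2 := by ring
  have two_pow : (2 : ℝ) ^ j = (√2 ^ j) ^ 2 := by
    rw [pow_right_comm, sq_sqrt zero_le_two]
  rw [leftBound, sqrt_div' _ this.le, sqrt_mul sieveConst_pos.le, sqrt_mul (by positivity),
    sqrt_mul (by positivity), pow_eight, sqrt_sq (by positivity), two_pow, sqrt_sq (by positivity)]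
  ring

theorem rightBound_mul_sqrt_leftBound (hn : 1 < n) (j : ℕ) :
    rightBound n j * √(leftBound n j) =
      sieveConst * √sieveConst * mainTerm n * ((√2)⁻¹ ^ j * (j + 1) ^ 4) := by
  have hlog := log_pos (Nat.one_lt_cast.mpr hn)
  have rpow_three_quarters : (n : ℝ) ^ ((3 : ℝ) / 4) = √n * √√n := by
    rw [← rpow_three_halves (by positivity), sqrt_eq_rpow, ← rpow_mul (by positivity)]
    norm_num
  have two_pow : (2 : ℝ) ^ j = √2 ^ j * √2 ^ j := by
    rw [← mul_pow, mul_self_sqrt zero_le_two]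
  rw [sqrt_leftBound hn, rightBound, mainTerm, rpow_three_quarters, rpow_three_halves hlog.le,
    two_pow, inv_pow]
  field_simp

end ClassSizes

section LargeN

/-! ### Estimates for large `n` -/

/-- The 60th root of `n`; all the exponents of `n` that occur are multiples of `1 / 60`. -/
noncomputable def sixtiethRoot (n : ℕ) : ℝ :=
  (n : ℝ) ^ ((1 : ℝ) / 60)

/-- `n` is so large that `n^(1/60)` absorbs the logarithmic factors of the lower-order terms. -/
def IsLarge (n : ℕ) : Prop :=
  2 ≤ log n ∧ 100 * sieveConst * log n ^ 14 ≤ sixtiethRoot n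

variable {n j : ℕ}

theorem sixtiethRoot_pow (n k : ℕ) : sixtiethRoot n ^ k = (n : ℝ) ^ ((k : ℝ) / 60) := by
  rw [sixtiethRoot, ← rpow_natCast, ← rpow_mul (by positivity), one_div_mul_eq_div]

theorem sixtiethRoot_pow_sixty (n : ℕ) : sixtiethRoot n ^ 60 = n := by
  rw [sixtiethRoot_pow, Nat.cast_ofNat, div_self (by norm_num), rpow_one]

theorem sixtiethRoot_pow_thirty (n : ℕ) : sixtiethRoot n ^ 30 = √n := by
  rw [sixtiethRoot_pow, sqrt_eq_rpow]
  norm_num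

theorem sixtiethRoot_nonneg (n : ℕ) : 0 ≤ sixtiethRoot n :=
  rpow_nonneg n.cast_nonneg _

theorem sqrt_sixtiethRoot_pow (n : ℕ) : √(sixtiethRoot n ^ 40) = sixtiethRoot n ^ 20 := by
  rw [← sqrt_sq (pow_nonneg (sixtiethRoot_nonneg n) 20), ← pow_mul]

theorem two_pow_natLog_le (hn : n ≠ 0) : (2 : ℝ) ^ Nat.log 1024 n ≤ sixtiethRoot n ^ 6 := by
  refine le_of_pow_le_pow_left₀ (n := 10) (by norm_num) (pow_nonneg (sixtiethRoot_nonneg n) 6) ?_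
  calc ((2 : ℝ) ^ Nat.log 1024 n) ^ 10 = 1024 ^ Nat.log 1024 n := by
        rw [pow_right_comm]
        norm_num
    _ ≤ n := mod_cast Nat.pow_log_le_self 1024 hn
    _ = (sixtiethRoot n ^ 6) ^ 10 := by rw [← pow_mul, sixtiethRoot_pow_sixty]

theorem le_two_pow_natLog_succ (n : ℕ) : sixtiethRoot n ^ 6 ≤ 2 ^ (Nat.log 1024 n + 1) := by
  refine le_of_pow_le_pow_left₀ (n := 10) (by norm_num) (by positivity) ?_
  calc (sixtiethRoot n ^ 6) ^ 10 = n := by rw [← pow_mul, sixtiethRoot_pow_sixty]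
    _ ≤ 1024 ^ (Nat.log 1024 n + 1) :=
        mod_cast (Nat.lt_pow_succ_log_self (by norm_num) n).le
    _ = ((2 : ℝ) ^ (Nat.log 1024 n + 1)) ^ 10 := by
        rw [pow_right_comm]
        norm_num

theorem natLog_le_log (hn : n ≠ 0) : (Nat.log 1024 n : ℝ) ≤ log n := by
  have one_le_log : 1 ≤ log 1024 := by
    rw [le_log_iff_exp_le (by norm_num)]
    linarith [exp_one_lt_d9]
  calc (Nat.log 1024 n : ℝ) ≤ Nat.log 1024 n * log 1024 :=
        le_mul_of_one_le_right (by positivity) one_le_log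
    _ = log ((1024 ^ Nat.log 1024 n : ℕ) : ℝ) := by push_cast; rw [log_pow]
    _ ≤ log n := log_le_log (by positivity) (mod_cast Nat.pow_log_le_self 1024 hn)

theorem card_filter_pow_three_le (n : ℕ) :
    (#{u ∈ Icc 1 n | u ^ 3 ≤ n ^ 2} : ℝ) ≤ sixtiethRoot n ^ 40 := by
  have := sixtiethRoot_nonneg n
  have subset_Icc : {u ∈ Icc 1 n | u ^ 3 ≤ n ^ 2} ⊆ Icc 1 ⌊sixtiethRoot n ^ 40⌋₊ := by
    intro u hu
    obtain ⟨hu1, hu3⟩ := mem_filter.mp hu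
    refine mem_Icc.mpr ⟨(mem_Icc.mp hu1).1, Nat.le_floor ?_⟩
    refine le_of_pow_le_pow_left₀ three_ne_zero (by positivity) ?_
    calc (u : ℝ) ^ 3 ≤ n ^ 2 := mod_cast hu3
      _ = (sixtiethRoot n ^ 60) ^ 2 := by rw [sixtiethRoot_pow_sixty]
      _ = (sixtiethRoot n ^ 40) ^ 3 := by ring
  calc (#{u ∈ Icc 1 n | u ^ 3 ≤ n ^ 2} : ℝ) ≤ #(Icc 1 ⌊sixtiethRoot n ^ 40⌋₊) :=
        mod_cast card_le_card subset_Icc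
    _ = ⌊sixtiethRoot n ^ 40⌋₊ := by simp
    _ ≤ sixtiethRoot n ^ 40 := Nat.floor_le (by positivity)

namespace IsLarge

theorem one_lt (h : IsLarge n) : 1 < n := by
  have hlog : 0 < log n := zero_lt_two.trans_le h.1
  by_contra! hn
  interval_cases n <;> simp at hlog

theorem ne_zero (h : IsLarge n) : n ≠ 0 :=
  Nat.ne_of_gt (zero_lt_one.trans h.one_lt)

theorem log_pos (h : IsLarge n) : 0 < log n :=
  zero_lt_two.trans_le h.1

theorem sieveConst_mul_log_pow_le (h : IsLarge n) {k : ℕ} (hk : k ≤ 14) :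
    100 * sieveConst * log n ^ k ≤ sixtiethRoot n := by
  have := sieveConst_pos
  refine le_trans ?_ h.2
  gcongr
  linarith [h.1]

theorem log_pow_le (h : IsLarge n) {k : ℕ} (hk : k ≤ 14) :
    100 * log n ^ k ≤ sixtiethRoot n := by
  have hlog := h.log_pos
  refine le_trans ?_ (h.sieveConst_mul_log_pow_le hk)
  gcongr
  linarith [one_le_sieveConst]

theorem hundred_le_sixtiethRoot (h : IsLarge n) : 100 ≤ sixtiethRoot n := by
  simpa using h.log_pow_le (Nat.zero_le 14)

theorem log_le_sixtiethRoot (h : IsLarge n) : log n ≤ sixtiethRoot n := by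
  have := h.log_pow_le (k := 1) (by norm_num)
  linarith [h.1]

theorem sixtiethRoot_pow_le (h : IsLarge n) {k l : ℕ} (hkl : k ≤ l) :
    sixtiethRoot n ^ k ≤ sixtiethRoot n ^ l :=
  pow_le_pow_right₀ (by linarith [h.hundred_le_sixtiethRoot]) hkl

theorem two_pow_le (h : IsLarge n) (hj : j < Nat.log 1024 n) : (2 : ℝ) ^ j ≤ sixtiethRoot n ^ 6 :=
  (pow_le_pow_right₀ one_le_two hj.le).trans (two_pow_natLog_le h.ne_zero)

theorem leftBound_le (h : IsLarge n) (hj : j < Nat.log 1024 n) :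
    leftBound n j ≤ sieveConst * log n ^ 7 * sixtiethRoot n ^ 36 := by
  have hlog := h.log_pos
  have := sieveConst_pos
  have := sixtiethRoot_nonneg n
  have succ_le_log : (j : ℝ) + 1 ≤ log n :=
    le_trans (mod_cast hj) (natLog_le_log h.ne_zero)
  rw [leftBound, div_le_iff₀ hlog, ← sixtiethRoot_pow_thirty]
  calc sieveConst * (sixtiethRoot n ^ 30 * 2 ^ j * (j + 1) ^ 8)
      ≤ sieveConst * (sixtiethRoot n ^ 30 * sixtiethRoot n ^ 6 * log n ^ 8) := by
        gcongr
        exact h.two_pow_le hj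
    _ = sieveConst * log n ^ 7 * sixtiethRoot n ^ 36 * log n := by ring

theorem leftBound_mul_log_pow_le (h : IsLarge n) (hj : j < Nat.log 1024 n) {k : ℕ} (hk : k ≤ 7) :
    100 * (leftBound n j * log n ^ k) ≤ sixtiethRoot n ^ 37 := by
  have := h.log_pos
  have := sixtiethRoot_nonneg n
  calc 100 * (leftBound n j * log n ^ k)
      ≤ 100 * (sieveConst * log n ^ 7 * sixtiethRoot n ^ 36 * log n ^ k) := by
        gcongr
        exact h.leftBound_le hj
    _ = 100 * sieveConst * log n ^ (7 + k) * sixtiethRoot n ^ 36 := by ring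
    _ ≤ sixtiethRoot n * sixtiethRoot n ^ 36 := by
        gcongr
        exact h.sieveConst_mul_log_pow_le (by omega)
    _ = sixtiethRoot n ^ 37 := by ring

theorem sixtiethRoot_pow_le_rightBound (h : IsLarge n) (hj : j < Nat.log 1024 n) :
    sixtiethRoot n ^ 23 ≤ rightBound n j := by
  have hlog := h.log_pos
  have := sixtiethRoot_nonneg n
  rw [rightBound, le_div_iff₀ hlog, ← sixtiethRoot_pow_thirty]
  calc sixtiethRoot n ^ 23 * log n ≤ sixtiethRoot n ^ 23 * sixtiethRoot n := by
        gcongr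
        exact h.log_le_sixtiethRoot
    _ = sixtiethRoot n ^ 24 := by ring
    _ ≤ sixtiethRoot n ^ 30 / 2 ^ j := by
        rw [le_div_iff₀ (by positivity)]
        calc sixtiethRoot n ^ 24 * 2 ^ j ≤ sixtiethRoot n ^ 24 * sixtiethRoot n ^ 6 := by
              gcongr
              exact h.two_pow_le hj
          _ = sixtiethRoot n ^ 30 := by ring
    _ ≤ sieveConst * (sixtiethRoot n ^ 30 / 2 ^ j) :=
        le_mul_of_one_le_left (by positivity) one_le_sieveConst

theorem log_mul_sqrt_leftBound_le (h : IsLarge n) (hj : j < Nat.log 1024 n) :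
    2 * log n * √(leftBound n j) ≤ rightBound n j := by
  have := sixtiethRoot_nonneg n
  refine le_trans ?_ (h.sixtiethRoot_pow_le_rightBound hj)
  refine le_of_pow_le_pow_left₀ two_ne_zero (by positivity) ?_
  have left_nonneg := (leftBound_pos h.one_lt j).le
  calc (2 * log n * √(leftBound n j)) ^ 2 = 4 * (leftBound n j * log n ^ 2) := by
        rw [mul_pow, sq_sqrt left_nonneg]
        ring
    _ ≤ 100 * (leftBound n j * log n ^ 2) := by
        gcongr
        norm_num
    _ ≤ sixtiethRoot n ^ 37 := h.leftBound_mul_log_pow_le hj (by norm_num)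
    _ ≤ sixtiethRoot n ^ 46 := h.sixtiethRoot_pow_le (by norm_num)
    _ = (sixtiethRoot n ^ 23) ^ 2 := by ring

theorem log_add_one_le (h : IsLarge n) {x : ℝ} (hx0 : 0 ≤ x) (hx : x ≤ sixtiethRoot n ^ 40) :
    log (x + 1) ≤ log n := by
  have hroot := h.hundred_le_sixtiethRoot
  have one_le_pow : 1 ≤ sixtiethRoot n ^ 40 := one_le_pow₀ (by linarith)
  refine log_le_log (by positivity) ?_
  calc x + 1 ≤ 2 * sixtiethRoot n ^ 40 := by linarith
    _ ≤ sixtiethRoot n * sixtiethRoot n ^ 40 := by gcongr; linarith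
    _ = sixtiethRoot n ^ 41 := by ring
    _ ≤ sixtiethRoot n ^ 60 := h.sixtiethRoot_pow_le (by norm_num)
    _ = n := sixtiethRoot_pow_sixty n

theorem log_leftBound_add_one_le (h : IsLarge n) (hj : j < Nat.log 1024 n) :
    log (leftBound n j + 1) ≤ log n := by
  have hpos := leftBound_pos h.one_lt j
  refine h.log_add_one_le hpos.le ?_
  calc leftBound n j ≤ 100 * (leftBound n j * log n ^ 0) := by linarith
    _ ≤ sixtiethRoot n ^ 37 := h.leftBound_mul_log_pow_le hj (by norm_num)
    _ ≤ sixtiethRoot n ^ 40 := h.sixtiethRoot_pow_le (by norm_num)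

theorem card_mulSidonSubsets_scale_le_exp (h : IsLarge n) (hj : j < Nat.log 1024 n) :
    (#(mulSidonSubsets {m ∈ smoothNumbers n | scale n m = j}) : ℝ) ≤
      exp (12 * (sieveConst * √sieveConst) * mainTerm n * ((√2)⁻¹ ^ j * (j + 1) ^ 5) +
        sixtiethRoot n ^ 37) := by
  have hn := h.one_lt
  have hright := rightBound_pos hn j
  have graphs_le := card_c4FreeGraphs_le_exp hright (rightBound_le_leftBound hn j)
    (by linarith [h.1]) (h.log_mul_sqrt_leftBound_le hj) (h.log_leftBound_add_one_le hj)
    (card_gapNumbers_le_leftBound hj) (card_gapNumbers_le_rightBound hj)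
  refine (Nat.cast_le.mpr (card_mulSidonSubsets_scale_le hj)).trans (graphs_le.trans ?_)
  rw [exp_le_exp]
  have main_le : rightBound n j * √(leftBound n j) * (12 + log (leftBound n j / rightBound n j)) ≤
      12 * (sieveConst * √sieveConst) * mainTerm n * ((√2)⁻¹ ^ j * (j + 1) ^ 5) :=
    calc _ ≤ rightBound n j * √(leftBound n j) * (12 * (j + 1)) := by
          gcongr
          linarith [log_leftBound_div_rightBound_le hn j, j.cast_nonneg (α := ℝ)]
      _ = _ := by
          rw [rightBound_mul_sqrt_leftBound hn]
          ring
  have error_le : 24 * leftBound n j * log n ^ 4 ≤ sixtiethRoot n ^ 37 := by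
    have : 0 ≤ leftBound n j * log n ^ 4 := by
      have := leftBound_pos hn j
      positivity
    linarith [h.leftBound_mul_log_pow_le hj (k := 4) (by norm_num)]
  exact add_le_add main_le error_le

theorem card_Icc_sqrt_le (h : IsLarge n) :
    (#(Icc 1 (Nat.sqrt (n / 4 ^ Nat.log 1024 n))) : ℝ) ≤ 2 * sixtiethRoot n ^ 24 := by
  have hroot : 0 < sixtiethRoot n := by linarith [h.hundred_le_sixtiethRoot]
  rw [Nat.card_Icc, Nat.add_sub_cancel]
  refine (cast_sqrt_div_four_pow_le _ _).trans ?_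
  rw [div_le_iff₀ (by positivity), ← sixtiethRoot_pow_thirty]
  calc sixtiethRoot n ^ 30 = sixtiethRoot n ^ 24 * sixtiethRoot n ^ 6 := by ring
    _ ≤ sixtiethRoot n ^ 24 * 2 ^ (Nat.log 1024 n + 1) := by
        gcongr
        exact le_two_pow_natLog_succ n
    _ = 2 * sixtiethRoot n ^ 24 * 2 ^ Nat.log 1024 n := by ring

theorem two_mul_sixtiethRoot_pow_le (h : IsLarge n) :
    2 * sixtiethRoot n ^ 24 ≤ sixtiethRoot n ^ 40 := by
  have hroot := h.hundred_le_sixtiethRoot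
  calc 2 * sixtiethRoot n ^ 24 ≤ sixtiethRoot n * sixtiethRoot n ^ 24 := by
        gcongr
        linarith
    _ = sixtiethRoot n ^ 25 := by ring
    _ ≤ sixtiethRoot n ^ 40 := h.sixtiethRoot_pow_le (by norm_num)

theorem log_mul_sqrt_sixtiethRoot_pow_le (h : IsLarge n) :
    2 * log n * √(sixtiethRoot n ^ 40) ≤ 2 * sixtiethRoot n ^ 24 := by
  have := sixtiethRoot_nonneg n
  calc 2 * log n * √(sixtiethRoot n ^ 40) ≤ 2 * sixtiethRoot n * sixtiethRoot n ^ 20 := by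
        rw [sqrt_sixtiethRoot_pow]
        gcongr
        exact h.log_le_sixtiethRoot
    _ = 2 * sixtiethRoot n ^ 21 := by ring
    _ ≤ 2 * sixtiethRoot n ^ 24 := by
        gcongr 2 * ?_
        exact h.sixtiethRoot_pow_le (by norm_num)

theorem top_scale_exponent_le (h : IsLarge n) :
    2 * sixtiethRoot n ^ 24 * √(sixtiethRoot n ^ 40) *
        (12 + log (sixtiethRoot n ^ 40 / (2 * sixtiethRoot n ^ 24))) +
      24 * sixtiethRoot n ^ 40 * log n ^ 4 ≤ 15 * (sixtiethRoot n ^ 44 * log n) := by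
  have hlog := h.1
  have hroot := h.hundred_le_sixtiethRoot
  have log_quot_le : log (sixtiethRoot n ^ 40 / (2 * sixtiethRoot n ^ 24)) ≤ log n := by
    refine log_le_log (by positivity) ?_
    rw [← sixtiethRoot_pow_sixty]
    refine (div_le_self (by positivity) ?_).trans (h.sixtiethRoot_pow_le (by norm_num))
    linarith [one_le_pow₀ (n := 24) (by linarith : 1 ≤ sixtiethRoot n)]
  have error_le : 24 * sixtiethRoot n ^ 40 * log n ^ 4 ≤ sixtiethRoot n ^ 44 * log n :=
    calc 24 * sixtiethRoot n ^ 40 * log n ^ 4 ≤ sixtiethRoot n ^ 40 * (100 * log n ^ 4) := by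
          linarith [show 0 ≤ sixtiethRoot n ^ 40 * log n ^ 4 by positivity]
      _ ≤ sixtiethRoot n ^ 40 * sixtiethRoot n := by
          gcongr
          exact h.log_pow_le (by norm_num)
      _ = sixtiethRoot n ^ 41 := by ring
      _ ≤ sixtiethRoot n ^ 44 := h.sixtiethRoot_pow_le (by norm_num)
      _ ≤ sixtiethRoot n ^ 44 * log n := le_mul_of_one_le_right (by positivity) (by linarith)
  calc _ ≤ 2 * sixtiethRoot n ^ 24 * sixtiethRoot n ^ 20 * (7 * log n) +
        sixtiethRoot n ^ 44 * log n := by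
        rw [sqrt_sixtiethRoot_pow]
        gcongr
        linarith
    _ = 15 * (sixtiethRoot n ^ 44 * log n) := by ring

theorem card_mulSidonSubsets_top_scale_le_exp (h : IsLarge n) :
    (#(mulSidonSubsets {m ∈ smoothNumbers n | scale n m = Nat.log 1024 n}) : ℝ) ≤
      exp (15 * (sixtiethRoot n ^ 44 * log n)) := by
  have hroot := h.hundred_le_sixtiethRoot
  calc _ ≤ _ := Nat.cast_le.mpr (card_mulSidonSubsets_scale_le_Icc n _)
    _ ≤ _ := card_c4FreeGraphs_le_exp (by positivity) h.two_mul_sixtiethRoot_pow_le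
        (by linarith [h.1]) h.log_mul_sqrt_sixtiethRoot_pow_le
        (h.log_add_one_le (by positivity) le_rfl) (card_filter_pow_three_le n) h.card_Icc_sqrt_le
    _ ≤ _ := exp_le_exp.mpr h.top_scale_exponent_le

theorem hundred_mul_le_mainTerm (h : IsLarge n) :
    100 * (sixtiethRoot n ^ 44 * log n) ≤ mainTerm n := by
  have hlog := h.1
  have := sixtiethRoot_nonneg n
  have sqrt_log_le : √(log n) ≤ log n := by
    rw [sqrt_le_left h.log_pos.le]
    nlinarith
  have rpow_eq : (n : ℝ) ^ ((3 : ℝ) / 4) = sixtiethRoot n ^ 45 := by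
    rw [sixtiethRoot_pow]
    norm_num
  rw [mainTerm, rpow_three_halves h.log_pos.le, rpow_eq, le_div_iff₀ (by positivity)]
  calc 100 * (sixtiethRoot n ^ 44 * log n) * (log n * √(log n))
      ≤ 100 * (sixtiethRoot n ^ 44 * log n) * (log n * log n) := by gcongr
    _ = sixtiethRoot n ^ 44 * (100 * log n ^ 3) := by ring
    _ ≤ sixtiethRoot n ^ 44 * sixtiethRoot n := by
        gcongr
        exact h.log_pow_le (by norm_num)
    _ = sixtiethRoot n ^ 45 := by ring

theorem mainTerm_nonneg (h : IsLarge n) : 0 ≤ mainTerm n :=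
  div_nonneg (rpow_nonneg n.cast_nonneg _) (rpow_nonneg h.log_pos.le _)

theorem rpow_two_thirds_mul_log_add_one_le (h : IsLarge n) :
    (n : ℝ) ^ ((2 : ℝ) / 3) * log n + 1 ≤ 2 * (sixtiethRoot n ^ 44 * log n) := by
  have hlog := h.1
  have hroot := h.hundred_le_sixtiethRoot
  have rpow_eq : (n : ℝ) ^ ((2 : ℝ) / 3) = sixtiethRoot n ^ 40 := by
    rw [sixtiethRoot_pow]
    norm_num
  have rpow_le : (n : ℝ) ^ ((2 : ℝ) / 3) * log n ≤ sixtiethRoot n ^ 44 * log n := by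
    rw [rpow_eq]
    gcongr ?_ * _
    exact h.sixtiethRoot_pow_le (by norm_num)
  have one_le : 1 ≤ sixtiethRoot n ^ 44 * log n :=
    one_le_mul_of_one_le_of_one_le (one_le_pow₀ (by linarith)) (by linarith)
  linarith

end IsLarge

/-- The sum over all scales of the relative contributions of the scales to the main term. -/
noncomputable def scaleSum : ℝ :=
  ∑' j : ℕ, (√2)⁻¹ ^ j * ((j : ℝ) + 1) ^ 5

theorem scaleSum_nonneg : 0 ≤ scaleSum :=
  tsum_nonneg fun _ ↦ by positivity

theorem summable_scaleSum : Summable fun j : ℕ ↦ (√2)⁻¹ ^ j * ((j : ℝ) + 1) ^ 5 := by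
  have norm_lt_one : ‖(√2)⁻¹‖ < 1 := by
    rw [norm_inv, norm_of_nonneg (by positivity)]
    exact inv_lt_one_of_one_lt₀ (lt_sqrt_of_sq_lt (by norm_num))
  have shifted : Summable fun j : ℕ ↦ ((j + 1 : ℕ) : ℝ) ^ 5 * (√2)⁻¹ ^ (j + 1) :=
    (summable_nat_add_iff (f := fun j : ℕ ↦ (j : ℝ) ^ 5 * (√2)⁻¹ ^ j) 1).mpr
      (summable_pow_mul_geometric_of_norm_lt_one 5 norm_lt_one)
  refine (shifted.mul_left √2).congr fun j ↦ ?_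
  have sqrt_two_mul_inv : √2 * (√2)⁻¹ = 1 := mul_inv_cancel₀ (by positivity)
  rw [pow_succ (√2)⁻¹, Nat.cast_add_one]
  linear_combination ((j : ℝ) + 1) ^ 5 * (√2)⁻¹ ^ j * sqrt_two_mul_inv

theorem IsLarge.card_mulSidonSubsets_smoothNumbers_le_exp (h : IsLarge n) :
    (#(mulSidonSubsets (smoothNumbers n)) : ℝ) ≤
      exp (12 * (sieveConst * √sieveConst) * mainTerm n * scaleSum +
        16 * (sixtiethRoot n ^ 44 * log n)) := by
  set c := 12 * (sieveConst * √sieveConst) * mainTerm n with hc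
  have hc0 : 0 ≤ c := by
    have := sieveConst_pos
    have := h.mainTerm_nonneg
    positivity
  have sum_le : ∑ j ∈ range (Nat.log 1024 n), (√2)⁻¹ ^ j * ((j : ℝ) + 1) ^ 5 ≤ scaleSum :=
    summable_scaleSum.sum_le_tsum _ fun _ _ ↦ by positivity
  have error_le : Nat.log 1024 n * sixtiethRoot n ^ 37 ≤ sixtiethRoot n ^ 44 * log n := by
    rw [mul_comm]
    have := natLog_le_log h.ne_zero
    have := h.sixtiethRoot_pow_le (k := 37) (l := 44) (by norm_num)
    have := sixtiethRoot_nonneg n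
    gcongr
  calc (#(mulSidonSubsets (smoothNumbers n)) : ℝ)
      ≤ (∏ j ∈ range (Nat.log 1024 n),
          (#(mulSidonSubsets {m ∈ smoothNumbers n | scale n m = j}) : ℝ)) *
          #(mulSidonSubsets {m ∈ smoothNumbers n | scale n m = Nat.log 1024 n}) := by
        rw [← prod_range_succ]
        exact_mod_cast card_mulSidonSubsets_smoothNumbers_le n
    _ ≤ (∏ j ∈ range (Nat.log 1024 n),
          exp (c * ((√2)⁻¹ ^ j * (j + 1) ^ 5) + sixtiethRoot n ^ 37)) *
          exp (15 * (sixtiethRoot n ^ 44 * log n)) := by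
        gcongr with j hj
        · exact h.card_mulSidonSubsets_scale_le_exp (mem_range.mp hj)
        · exact h.card_mulSidonSubsets_top_scale_le_exp
    _ = exp (c * ∑ j ∈ range (Nat.log 1024 n), (√2)⁻¹ ^ j * ((j : ℝ) + 1) ^ 5 +
          Nat.log 1024 n * sixtiethRoot n ^ 37 + 15 * (sixtiethRoot n ^ 44 * log n)) := by
        rw [← exp_sum, ← exp_add, sum_add_distrib, ← mul_sum, sum_const, card_range, nsmul_eq_mul]
    _ ≤ exp (c * scaleSum + 16 * (sixtiethRoot n ^ 44 * log n)) := by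
        rw [exp_le_exp]
        linarith [mul_le_mul_of_nonneg_left sum_le hc0]

theorem S_le_mul (n : ℕ) :
    S n ≤ #(mulSidonSubsets {m ∈ Icc 1 n | n ^ 2 < greatestPrimeFactor m ^ 3}) *
      #(mulSidonSubsets (smoothNumbers n)) := by
  have S_eq : S n = #(mulSidonSubsets (Icc 1 n)) := rfl
  rw [S_eq, smoothNumbers]
  convert card_mulSidonSubsets_le_filter_mul_filter_not (Icc 1 n)
    fun m ↦ n ^ 2 < greatestPrimeFactor m ^ 3

/-- The constant in front of `mainTerm n` in the final bound. -/
noncomputable def mainConst : ℝ :=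
  12 * (sieveConst * √sieveConst) * scaleSum + 1

theorem mainConst_pos : 0 < mainConst := by
  have := sieveConst_pos
  have := scaleSum_nonneg
  unfold mainConst
  positivity

theorem IsLarge.S_le (h : IsLarge n) : (S n : ℝ) ≤ T n * exp (mainConst * mainTerm n) := by
  have error_nonneg : 0 ≤ sixtiethRoot n ^ 44 * log n :=
    mul_nonneg (pow_nonneg (sixtiethRoot_nonneg n) 44) h.log_pos.le
  calc (S n : ℝ) ≤ #(mulSidonSubsets {m ∈ Icc 1 n | n ^ 2 < greatestPrimeFactor m ^ 3}) *
        #(mulSidonSubsets (smoothNumbers n)) := mod_cast S_le_mul n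
    _ ≤ T n * exp ((n : ℝ) ^ ((2 : ℝ) / 3) * log n + 1) *
        exp (12 * (sieveConst * √sieveConst) * mainTerm n * scaleSum +
          16 * (sixtiethRoot n ^ 44 * log n)) := by
        gcongr
        · exact card_mulSidonSubsets_large_le (Nat.pos_of_ne_zero h.ne_zero)
        · exact h.card_mulSidonSubsets_smoothNumbers_le_exp
    _ = T n * exp (((n : ℝ) ^ ((2 : ℝ) / 3) * log n + 1) +
        (12 * (sieveConst * √sieveConst) * mainTerm n * scaleSum +
          16 * (sixtiethRoot n ^ 44 * log n))) := by rw [mul_assoc, ← exp_add]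
    _ ≤ T n * exp (mainConst * mainTerm n) := by
        gcongr
        rw [mainConst]
        linarith [h.hundred_mul_le_mainTerm, h.rpow_two_thirds_mul_log_add_one_le]

theorem eventually_isLarge : ∀ᶠ n : ℕ in Filter.atTop, IsLarge n := by
  have hconst : 0 < 100 * sieveConst := by linarith [sieveConst_pos]
  have log_isLittleO := (isLittleO_log_rpow_rpow_atTop (14 : ℝ)
    (by norm_num : (0 : ℝ) < 1 / 60)).def (inv_pos.mpr hconst)
  have log_ge := tendsto_log_atTop.eventually_ge_atTop 2
  filter_upwards [tendsto_natCast_atTop_atTop.eventually log_isLittleO,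
    tendsto_natCast_atTop_atTop.eventually log_ge] with n hlittle hlog
  refine ⟨hlog, ?_⟩
  rwa [norm_of_nonneg (by positivity), norm_of_nonneg (by positivity), ← div_eq_inv_mul,
    le_div_iff₀' hconst, rpow_ofNat] at hlittle

end LargeN

theorem count_mulSidon_upper :
    ∃ C : ℝ, 0 < C ∧ ∃ N : ℕ, ∀ n : ℕ, N ≤ n →
      (S n : ℝ) ≤ (T n : ℝ) *
        2 ^ (C * (n : ℝ) ^ ((3 : ℝ)/4) / (Real.log n) ^ ((3 : ℝ)/2)) := by
  have log_two_pos : 0 < log 2 := log_pos one_lt_two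
  obtain ⟨N, hN⟩ := Filter.eventually_atTop.mp eventually_isLarge
  refine ⟨mainConst / log 2, div_pos mainConst_pos log_two_pos, N, fun n hn ↦ ?_⟩
  calc (S n : ℝ) ≤ T n * exp (mainConst * mainTerm n) := (hN n hn).S_le
    _ = T n * 2 ^ (mainConst / log 2 * n ^ ((3 : ℝ) / 4) / log n ^ ((3 : ℝ) / 2)) := by
        rw [rpow_def_of_pos zero_lt_two, mainTerm]
        congr 2
        field_simp
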